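/- arXiv:1801.09188 — 2 statements merged into one kernel-verified Lean document; each statement's English description precedes it below -/
import Mathlib

section
/- Let E = E(J_∅,{n_k},{c_k},{η_{k,j}}) be a homogeneous perfect set with dim_H E = 1. Suppose there exists a constant C ≥ 1 such that max_{1≤l≤n_k−1} η_{k,l} ≤ C · min_{1≤l≤n_k−1} η_{k,l} for all k ≥ 1. Then dim_H f(E) = 1 for every 1-dimensional quasisymmetric mapping f; in particular E is 1-dimensional quasisymmetrically minimal. -/
open Set Filter MeasureTheory
open scoped ENNReal

/-- `σ` is a valid word: the entry at (0-indexed) position `j` lies in `[1, n (j+1)]`,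
so that words of length `k` correspond to indices `(i₁, …, i_k)` with `1 ≤ i_j ≤ n_j`. -/
def ValidWord (n : ℕ → ℕ) (σ : List ℕ) : Prop :=
  ∀ j (h : j < σ.length), 1 ≤ σ.get ⟨j, h⟩ ∧ σ.get ⟨j, h⟩ ≤ n (j + 1)

/-- A homogeneous perfect structure with parameters `n`, `c`, `η` on `J_∅ = [0,1]`:
`a σ` and `b σ` are the left and right endpoints of the basic interval `J_σ = [a σ, b σ]`.
The fields record that `n k ≥ 2`, `0 < c k < 1`, `η k j ≥ 0`, that the children
`J_{σ*1}, …, J_{σ*n_{k+1}}` of `J_σ` (for `σ` of length `k`) are subintervals of `J_σ`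
situated from left to right, that `|J_{σ*i}| = c_{k+1} |J_σ|`, and that the gaps have
the prescribed lengths `η_{k+1,0}, …, η_{k+1,n_{k+1}}`. -/
structure HomogeneousPerfectStructure (n : ℕ → ℕ) (c : ℕ → ℝ) (η : ℕ → ℕ → ℝ) where
  hn : ∀ k, 1 ≤ k → 2 ≤ n k
  hc : ∀ k, 1 ≤ k → 0 < c k ∧ c k < 1
  hη : ∀ k j, 1 ≤ k → j ≤ n k → 0 ≤ η k j
  a : List ℕ → ℝ
  b : List ℕ → ℝ
  root_a : a [] = 0
  root_b : b [] = 1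
  sub_left : ∀ σ, ValidWord n σ → ∀ i, 1 ≤ i → i ≤ n (σ.length + 1) →
    a σ ≤ a (σ ++ [i])
  sub_right : ∀ σ, ValidWord n σ → ∀ i, 1 ≤ i → i ≤ n (σ.length + 1) →
    b (σ ++ [i]) ≤ b σ
  ordered : ∀ σ, ValidWord n σ → ∀ i, 1 ≤ i → i + 1 ≤ n (σ.length + 1) →
    b (σ ++ [i]) ≤ a (σ ++ [i + 1])
  len_eq : ∀ σ, ValidWord n σ → ∀ i, 1 ≤ i → i ≤ n (σ.length + 1) →
    b (σ ++ [i]) - a (σ ++ [i]) = c (σ.length + 1) * (b σ - a σ)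
  gap_left : ∀ σ, ValidWord n σ →
    a (σ ++ [1]) - a σ = η (σ.length + 1) 0
  gap_right : ∀ σ, ValidWord n σ →
    b σ - b (σ ++ [n (σ.length + 1)]) = η (σ.length + 1) (n (σ.length + 1))
  gap_mid : ∀ σ, ValidWord n σ → ∀ i, 1 ≤ i → i ≤ n (σ.length + 1) - 1 →
    a (σ ++ [i + 1]) - b (σ ++ [i]) = η (σ.length + 1) i

namespace HomogeneousPerfectStructure

variable {n : ℕ → ℕ} {c : ℕ → ℝ} {η : ℕ → ℕ → ℝ}

/-- `E_k`, the union of the basic intervals of order `k`. -/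
def Ek (S : HomogeneousPerfectStructure n c η) (k : ℕ) : Set ℝ :=
  ⋃ σ ∈ {σ : List ℕ | ValidWord n σ ∧ σ.length = k}, Icc (S.a σ) (S.b σ)

/-- The homogeneous perfect set `E = ⋂_{k ≥ 0} E_k`. -/
def E (S : HomogeneousPerfectStructure n c η) : Set ℝ := ⋂ k, S.Ek k

end HomogeneousPerfectStructure

/-- `max_{1 ≤ l ≤ n_k - 1} η_{k,l}`. -/
noncomputable def etaMax (n : ℕ → ℕ) (η : ℕ → ℕ → ℝ) (k : ℕ) : ℝ :=
  sSup (η k '' {l | 1 ≤ l ∧ l ≤ n k - 1})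

/-- `min_{1 ≤ l ≤ n_k - 1} η_{k,l}`. -/
noncomputable def etaMin (n : ℕ → ℕ) (η : ℕ → ℕ → ℝ) (k : ℕ) : ℝ :=
  sInf (η k '' {l | 1 ≤ l ∧ l ≤ n k - 1})

/-- A homeomorphism `f : ℝ → ℝ` is a 1-dimensional quasisymmetric mapping if there is a
homeomorphism `η : [0,∞) → [0,∞)` such that
`|f x - f a| / |f x - f b| ≤ η (|x - a| / |x - b|)` for all triples of distinct points. -/
def IsQuasisymmetric (f : ℝ ≃ₜ ℝ) : Prop :=
  ∃ h : (Set.Ici (0 : ℝ)) ≃ₜ (Set.Ici (0 : ℝ)),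
    ∀ a b x : ℝ, x ≠ a → x ≠ b → a ≠ b →
      |f x - f a| / |f x - f b| ≤
        (h ⟨|x - a| / |x - b|, Set.mem_Ici.mpr (div_nonneg (abs_nonneg _) (abs_nonneg _))⟩ : ℝ)

/-!
Cutting the two outer gaps off every basic interval does not change `E`, and makes all gaps of a
given order comparable to their average. Let `F` be whichever of `f` and `-f` is increasing, and
give the cells of each interval masses proportional to the lengths of their `F`-images. Inverting
this distribution parametrizes a subset of `F '' E` by `[0, 1]`, and the inverse parametrization is
`d`-Hölder as soon as the mass of an interval `I` is `O(|F I| ^ d)`. To see this for every `d < 1`,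
compare an interval having `m` children with one of its children. The relative length of the image
of the child is at most `m ^ (-q)`. Its mass is larger than this by a factor that depends on the
adjacent gaps, and quasisymmetry bounds that factor by `(1 + ε) * u ^ A`, where `u` is the ratio of
the length of the interval to the total length of its children. As `dim E = 1`, the product of the
`u` along a branch grows more slowly than any power of the product of the `m`.
-/

section Dimension

open scoped NNReal Topology

theorem dimH_le_of_frequently_card_mul_rpow_le {X : Type*} [EMetricSpace X] {E : Set X}
    {ι : ℕ → Type*} [∀ k, Fintype (ι k)] {t : ∀ k, ι k → Set X} {r : ℕ → ℝ≥0∞}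
    (hr : Tendsto r atTop (𝓝 0)) (hdiam : ∀ k i, Metric.ediam (t k i) ≤ r k)
    (hcover : ∀ k, E ⊆ ⋃ i, t k i) {s : ℝ≥0}
    (hcard : ∃ᶠ k in atTop, Fintype.card (ι k) * r k ^ (s : ℝ) ≤ 1) : dimH E ≤ s := by
  borelize X
  refine dimH_le_of_hausdorffMeasure_ne_top (ne_top_of_le_ne_top ENNReal.one_ne_top ?_)
  refine (Measure.hausdorffMeasure_le_liminf_sum s E r hr t (.of_forall hdiam)
    (.of_forall hcover)).trans (liminf_le_of_frequently_le' (hcard.mono fun k hk => le_trans ?_ hk))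
  calc ∑ i, Metric.ediam (t k i) ^ (s : ℝ) ≤ ∑ _i : ι k, r k ^ (s : ℝ) :=
        Finset.sum_le_sum fun i _ => ENNReal.rpow_le_rpow (hdiam k i) s.2
    _ = Fintype.card (ι k) * r k ^ (s : ℝ) := by
        rw [Finset.sum_const, Finset.card_univ, nsmul_eq_mul]

theorem dimH_le_dimH_image_div_of_dist_le {X Y : Type*} [MetricSpace X] [MetricSpace Y]
    {φ : X → Y} {s : Set X} {C r : ℝ≥0} (hr : 0 < r)
    (h : ∀ x ∈ s, ∀ y ∈ s, dist x y ≤ C * dist (φ x) (φ y) ^ (r : ℝ)) :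
    dimH s ≤ dimH (φ '' s) / r := by
  rcases s.eq_empty_or_nonempty with rfl | ⟨x₀, -⟩
  · simp only [dimH_empty, zero_le]
  have : Nonempty X := ⟨x₀⟩
  have hinj : InjOn φ s := fun x hx y hy hxy => by
    simpa [hxy, Real.zero_rpow (NNReal.coe_pos.2 hr).ne'] using h x hx y hy
  have hleft := hinj.leftInvOn_invFunOn
  have hholder : HolderOnWith C r (Function.invFunOn φ s) (φ '' s) := by
    rintro _ ⟨x, hx, rfl⟩ _ ⟨y, hy, rfl⟩
    rw [hleft hx, hleft hy, edist_nndist, edist_nndist, ← ENNReal.coe_rpow_of_nonneg _ r.coe_nonneg]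
    exact_mod_cast h x hx y hy
  simpa only [hleft.image_image] using hholder.dimH_image_le hr

end Dimension

section Sequences

theorem le_of_tendsto_zero_of_le_or_step {u v : ℕ → ℝ} (hu : Tendsto u atTop (nhds 0))
    (hv : ∀ k, 0 ≤ v k)
    (h : ∀ k, u k ≤ v k ∨ u k ≤ u (k + 1) ∧ v (k + 1) ≤ v k) (k : ℕ) : u k ≤ v k := by
  by_contra! hk
  have hstep : ∀ i, u k ≤ u (k + i) ∧ v (k + i) ≤ v k := fun i => by
    induction i with
    | zero => exact ⟨le_rfl, le_rfl⟩
    | succ i ih =>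
      rcases h (k + i) with hle | ⟨hu', hv'⟩
      · linarith
      · exact ⟨ih.1.trans hu', hv'.trans ih.2⟩
  have hlim : Tendsto (fun i => u (k + i)) atTop (nhds 0) := by
    simpa only [add_comm k] using (tendsto_add_atTop_iff_nat k).2 hu
  linarith [ge_of_tendsto' hlim fun i => (hstep i).1, hv k]

theorem exists_forall_res {α : Type*} {P : List α → Prop} (hnil : P [])
    (hcons : ∀ l, P l → ∃ a, P (a :: l)) : ∃ x : ℕ → α, ∀ k, P (PiNat.res x k) := by
  choose g hg using hcons
  let path : ℕ → {l // P l} := Nat.rec ⟨[], hnil⟩ fun _ l => ⟨g l l.2 :: l, hg l l.2⟩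
  refine ⟨fun k => g (path k).1 (path k).2, fun k => ?_⟩
  have hpath : PiNat.res (fun k => g (path k).1 (path k).2) k = (path k).1 := by
    induction k with
    | zero => rfl
    | succ k ih => rw [PiNat.res_succ, ih]
  exact hpath ▸ (path k).2

end Sequences

/-- The two-sided Beurling–Ahlfors condition with constant `H`: an increasing function whose
increments over adjacent intervals of equal length are comparable. Since `r` may have either sign,
`abs_add_sub_le` bounds each of the two increments by the other. -/
structure IsBeurlingAhlfors (F : ℝ → ℝ) (H : ℝ) : Prop where
  strictMono : StrictMono F
  abs_add_sub_le : ∀ x r, |F (x + r) - F x| ≤ H * |F (x - r) - F x|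

namespace IsBeurlingAhlfors

variable {F : ℝ → ℝ} {H x y z w u v : ℝ}

theorem one_le (hF : IsBeurlingAhlfors F H) : 1 ≤ H := by
  have hpos : 0 < |F (0 + 1) - F 0| :=
    abs_pos.2 (sub_ne_zero.2 (hF.strictMono.injective.ne (by norm_num)))
  have hneg : |F (0 - 1) - F 0| ≤ H * |F (0 + 1) - F 0| := by
    simpa only [sub_neg_eq_add, ← sub_eq_add_neg] using hF.abs_add_sub_le 0 (-1)
  have hle := hF.abs_add_sub_le 0 1
  have hH : 0 ≤ H := nonneg_of_mul_nonneg_left ((abs_nonneg _).trans hneg) hpos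
  by_contra! hlt
  nlinarith [mul_le_mul_of_nonneg_left hneg hH, mul_pos (sub_pos.2 hlt) hpos]

theorem pos (hF : IsBeurlingAhlfors F H) : 0 < H := one_pos.trans_le hF.one_le

theorem abs_sub_le_of_mem_uIcc (hF : IsBeurlingAhlfors F H) (hw : w ∈ uIcc x z) :
    |F w - F x| ≤ |F z - F x| :=
  abs_sub_left_of_mem_uIcc (hF.strictMono.monotone.mapsTo_uIcc hw)

theorem abs_sub_le_mul_of_abs_le (hF : IsBeurlingAhlfors F H) (h : |w - x| ≤ |z - x|) :
    |F w - F x| ≤ H * |F z - F x| := by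
  obtain hw | hw : w ∈ uIcc x z ∨ w ∈ uIcc x (x - (z - x)) := by
    simp only [mem_uIcc]
    grind
  · exact (hF.abs_sub_le_of_mem_uIcc hw).trans (le_mul_of_one_le_left (abs_nonneg _) hF.one_le)
  · simpa only [← sub_eq_add_neg, sub_neg_eq_add, add_sub_cancel] using
      (hF.abs_sub_le_of_mem_uIcc hw).trans (hF.abs_add_sub_le x (-(z - x)))

theorem abs_sub_two_pow_mul_le (hF : IsBeurlingAhlfors F H) (m : ℕ) (x r : ℝ) :
    |F (x + 2 ^ m * r) - F x| ≤ (1 + H) ^ m * |F (x + r) - F x| := by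
  induction m generalizing r with
  | zero => simp only [pow_zero, one_mul, le_refl]
  | succ m ih =>
    have hadj : |F (x + r + r) - F (x + r)| ≤ H * |F (x + r) - F x| := by
      simpa only [add_sub_cancel_right, abs_sub_comm (F x)] using hF.abs_add_sub_le (x + r) r
    have htri := abs_sub_le (F (x + r + r)) (F (x + r)) (F x)
    have hpow : 0 ≤ (1 + H) ^ m := pow_nonneg (by linarith [hF.pos]) m
    calc |F (x + 2 ^ (m + 1) * r) - F x| = |F (x + 2 ^ m * (r + r)) - F x| := by ring_nf
      _ ≤ (1 + H) ^ m * |F (x + (r + r)) - F x| := ih (r + r)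
      _ ≤ (1 + H) ^ m * ((1 + H) * |F (x + r) - F x|) := by
        rw [← add_assoc]
        gcongr
        linarith
      _ = (1 + H) ^ (m + 1) * |F (x + r) - F x| := by ring

theorem abs_sub_le_of_abs_le_two_pow_mul (hF : IsBeurlingAhlfors F H) {m : ℕ}
    (h : |w - x| ≤ 2 ^ m * |z - x|) : |F w - F x| ≤ H * (1 + H) ^ m * |F z - F x| := by
  have hw : |w - x| ≤ |x + 2 ^ m * (z - x) - x| := by
    rwa [add_sub_cancel_left, abs_mul, abs_of_pos (by positivity : (0 : ℝ) < 2 ^ m)]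
  have hz := hF.abs_sub_two_pow_mul_le m x (z - x)
  rw [add_sub_cancel] at hz
  calc |F w - F x| ≤ H * |F (x + 2 ^ m * (z - x)) - F x| := hF.abs_sub_le_mul_of_abs_le hw
    _ ≤ H * ((1 + H) ^ m * |F z - F x|) := mul_le_mul_of_nonneg_left hz hF.pos.le
    _ = H * (1 + H) ^ m * |F z - F x| := by ring

theorem exists_abs_sub_le_mul_pow (hF : IsBeurlingAhlfors F H) :
    ∃ p : ℕ, ∀ t : ℝ, 1 ≤ t → ∀ x w z, |w - x| ≤ t * |z - x| →
      |F w - F x| ≤ H * (2 * t) ^ p * |F z - F x| := by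
  obtain ⟨p, hp⟩ := pow_unbounded_of_one_lt (1 + H) one_lt_two
  refine ⟨p, fun t ht x w z h => ?_⟩
  obtain ⟨m, hm, hm'⟩ := exists_nat_pow_near ht one_lt_two
  have hpow : (1 + H) ^ (m + 1) ≤ (2 * t) ^ p := calc
    (1 + H) ^ (m + 1) ≤ ((2 : ℝ) ^ p) ^ (m + 1) :=
      pow_le_pow_left₀ (by linarith [hF.pos]) hp.le _
    _ = (2 * 2 ^ m) ^ p := by rw [← pow_mul, mul_comm p, pow_mul, pow_succ']
    _ ≤ (2 * t) ^ p := by gcongr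
  have hH := hF.pos
  calc |F w - F x| ≤ H * (1 + H) ^ (m + 1) * |F z - F x| :=
        hF.abs_sub_le_of_abs_le_two_pow_mul (h.trans (by gcongr))
    _ ≤ H * (2 * t) ^ p * |F z - F x| := by gcongr

theorem sub_le_two_mul_abs_sub (hF : IsBeurlingAhlfors F H) (hux : u ≤ x) (hxv : x ≤ v)
    (h : v - u ≤ |z - x|) : F v - F u ≤ 2 * H * |F z - F x| := by
  have hv : |v - x| ≤ |z - x| := by rw [abs_of_nonneg] <;> linarith
  have hu : |u - x| ≤ |z - x| := by rw [abs_of_nonpos] <;> linarith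
  linarith [le_abs_self (F v - F x), neg_abs_le (F u - F x), hF.abs_sub_le_mul_of_abs_le hv,
    hF.abs_sub_le_mul_of_abs_le hu]

theorem exists_sub_le_mul_of_two_mul_le (hF : IsBeurlingAhlfors F H) :
    ∃ θ ∈ Ioo (0 : ℝ) 1, ∀ u x y v, u ≤ x → x ≤ y → y ≤ v → 2 * (y - x) ≤ v - u →
      F y - F x ≤ θ * (F v - F u) := by
  set κ := H * (1 + H) ^ 1
  have hκ : 0 < κ := mul_pos hF.pos (pow_pos (by linarith [hF.pos]) 1)
  refine ⟨κ / (1 + κ), ⟨by positivity, by rw [div_lt_one (by positivity)]; linarith⟩,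
    fun u x y v hux hxy hyv h => ?_⟩
  have hmono := hF.strictMono.monotone
  have hFu := hmono hux
  have hFx := hmono hxy
  have hFv := hmono hyv
  -- one of the two components of `[u, v] \ [x, y]` has at least half the length of `[x, y]`
  have hside : F y - F x ≤ κ * (F v - F y) ∨ F y - F x ≤ κ * (F x - F u) := by
    rcases le_total (x - u) (v - y) with hle | hle
    · left
      have hxv : |x - y| ≤ 2 ^ 1 * |v - y| := by
        rw [abs_of_nonpos (by linarith), abs_of_nonneg (by linarith)]
        linarith
      simpa only [abs_of_nonpos (sub_nonpos.2 hFx), neg_sub, abs_of_nonneg (sub_nonneg.2 hFv)]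
        using hF.abs_sub_le_of_abs_le_two_pow_mul hxv
    · right
      have hyu : |y - x| ≤ 2 ^ 1 * |u - x| := by
        rw [abs_of_nonneg (by linarith), abs_of_nonpos (by linarith)]
        linarith
      simpa only [abs_of_nonneg (sub_nonneg.2 hFx), abs_of_nonpos (sub_nonpos.2 hFu), neg_sub]
        using hF.abs_sub_le_of_abs_le_two_pow_mul hyu
  rw [div_mul_eq_mul_div, le_div_iff₀ (by positivity)]
  rcases hside with hle | hle <;> nlinarith

theorem exists_sub_le_pow_mul (hF : IsBeurlingAhlfors F H) :
    ∃ θ ∈ Ioo (0 : ℝ) 1, ∀ (m : ℕ) (u x y v : ℝ), u ≤ x → x ≤ y → y ≤ v →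
      2 ^ m * (y - x) ≤ v - u → F y - F x ≤ θ ^ m * (F v - F u) := by
  obtain ⟨θ, hθ, hhalf⟩ := hF.exists_sub_le_mul_of_two_mul_le
  refine ⟨θ, hθ, fun m => ?_⟩
  have hmono := hF.strictMono.monotone
  induction m with
  | zero =>
    intro u x y v hux _ hyv _
    linarith [hmono hux, hmono hyv]
  | succ m ih =>
    intro u x y v hux hxy hyv h
    rw [pow_succ] at h
    have hone : 1 ≤ (2 : ℝ) ^ m := one_le_pow₀ one_le_two
    -- `[u', u' + (v - u) / 2]` is a half-length interval between `[x, y]` and `[u, v]`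
    obtain ⟨u', huu', hu'x, hyu', hu'v⟩ : ∃ u', u ≤ u' ∧ u' ≤ x ∧ y ≤ u' + (v - u) / 2 ∧
        u' + (v - u) / 2 ≤ v := by
      refine ⟨max u (y - (v - u) / 2), le_max_left _ _, max_le hux ?_, ?_, ?_⟩
      · nlinarith
      · linarith [le_max_right u (y - (v - u) / 2)]
      · rw [← le_sub_iff_add_le]
        exact max_le (by linarith) (by linarith)
    calc F y - F x ≤ θ ^ m * (F (u' + (v - u) / 2) - F u') :=
          ih _ _ _ _ hu'x hxy hyu' (by linarith)
      _ ≤ θ ^ m * (θ * (F v - F u)) := mul_le_mul_of_nonneg_left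
          (hhalf _ _ _ _ huu' (by linarith) hu'v (by linarith)) (pow_nonneg hθ.1.le m)
      _ = θ ^ (m + 1) * (F v - F u) := by ring

theorem exists_sub_le_rpow_neg_mul (hF : IsBeurlingAhlfors F H) :
    ∃ q : ℝ, 0 < q ∧ ∀ n : ℕ, 2 ≤ n → ∀ u x y v : ℝ, u ≤ x → x ≤ y → y ≤ v →
      n * (y - x) ≤ v - u → F y - F x ≤ (n : ℝ) ^ (-q) * (F v - F u) := by
  obtain ⟨θ, ⟨hθ0, hθ1⟩, hpow⟩ := hF.exists_sub_le_pow_mul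
  have hq : 0 < -Real.logb 4 θ := neg_pos.2 (Real.logb_neg (by norm_num) hθ0 hθ1)
  refine ⟨-Real.logb 4 θ, hq, fun n hn u x y v hux hxy hyv h => ?_⟩
  set m := Nat.log 2 n
  have hm : 1 ≤ m := Nat.log_pos one_lt_two hn
  have hmn : (2 : ℝ) ^ m ≤ n := by exact_mod_cast Nat.pow_log_le_self 2 (by omega)
  have hnm : (n : ℝ) ≤ 4 ^ m := by
    have hlt : n < 2 ^ (m + 1) := Nat.lt_pow_succ_log_self one_lt_two n
    have hle : 2 ^ (m + 1) ≤ 4 ^ m := by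
      rw [show 4 = 2 ^ 2 from rfl, ← pow_mul]
      exact Nat.pow_le_pow_right two_pos (by omega)
    exact_mod_cast hlt.le.trans hle
  have hθn : θ ^ m ≤ (n : ℝ) ^ (-(-Real.logb 4 θ)) := calc
    θ ^ m = ((4 : ℝ) ^ m) ^ (-(-Real.logb 4 θ)) := by
      rw [neg_neg, ← Real.rpow_natCast_mul (by norm_num), mul_comm, Real.rpow_mul_natCast
        (by norm_num), Real.rpow_logb (by norm_num) (by norm_num) hθ0]
    _ ≤ (n : ℝ) ^ (-(-Real.logb 4 θ)) :=
      Real.rpow_le_rpow_of_nonpos (by positivity) hnm (neg_nonpos.2 hq.le)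
  have hmono := hF.strictMono.monotone
  calc F y - F x ≤ θ ^ m * (F v - F u) :=
        hpow m u x y v hux hxy hyv
          ((mul_le_mul_of_nonneg_right hmn (sub_nonneg.2 hxy)).trans h)
    _ ≤ (n : ℝ) ^ (-(-Real.logb 4 θ)) * (F v - F u) :=
        mul_le_mul_of_nonneg_right hθn (sub_nonneg.2 (hmono (by linarith)))

theorem exists_abs_sub_le_of_abs_le (hF : IsBeurlingAhlfors F H) {ε : ℝ} (hε : 0 < ε) :
    ∃ δ : ℝ, 0 < δ ∧ ∀ x w z, |w - x| ≤ δ * |z - x| → |F w - F x| ≤ ε * |F z - F x| := by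
  obtain ⟨θ, ⟨hθ0, hθ1⟩, hpow⟩ := hF.exists_sub_le_pow_mul
  obtain ⟨m, hm⟩ := exists_pow_lt_of_lt_one (div_pos hε hF.pos) hθ1
  have hδ : (0 : ℝ) < (1 / 2) ^ m := by positivity
  have hδ1 : ((1 : ℝ) / 2) ^ m ≤ 1 := pow_le_one₀ (by norm_num) (by norm_num)
  have hδm : (2 : ℝ) ^ m * (1 / 2) ^ m = 1 := by rw [← mul_pow]; norm_num
  refine ⟨(1 / 2) ^ m, hδ, fun x w z h => ?_⟩
  set w' := x + (1 / 2) ^ m * (z - x) with hw'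
  have hww' : |w - x| ≤ |w' - x| := by
    rwa [hw', add_sub_cancel_left, abs_mul, abs_of_pos hδ]
  have hw'z : |F w' - F x| ≤ θ ^ m * |F z - F x| := by
    have hmono := hF.strictMono.monotone
    rcases le_total x z with hxz | hzx
    · have hxw' : x ≤ w' := by nlinarith
      rw [abs_of_nonneg (sub_nonneg.2 (hmono hxw')), abs_of_nonneg (sub_nonneg.2 (hmono hxz))]
      exact hpow m x x w' z le_rfl hxw' (by nlinarith) (by linear_combination (z - x) * hδm)
    · have hw'x : w' ≤ x := by nlinarith
      rw [abs_of_nonpos (sub_nonpos.2 (hmono hw'x)), abs_of_nonpos (sub_nonpos.2 (hmono hzx)),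
        neg_sub, neg_sub]
      exact hpow m z w' x x (by nlinarith) hw'x le_rfl (by linear_combination (x - z) * hδm)
  calc |F w - F x| ≤ H * |F w' - F x| := hF.abs_sub_le_mul_of_abs_le hww'
    _ ≤ H * (θ ^ m * |F z - F x|) := mul_le_mul_of_nonneg_left hw'z hF.pos.le
    _ ≤ H * (ε / H * |F z - F x|) := by have := hF.pos; gcongr
    _ = ε * |F z - F x| := by rw [← mul_assoc, mul_div_cancel₀ _ hF.pos.ne']

theorem exists_abs_sub_le_mul_pow_of_abs_le (hF : IsBeurlingAhlfors F H) {B ε : ℝ} (hB : 1 ≤ B)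
    (hε : 0 < ε) : ∃ A : ℕ, ∀ t : ℝ, 1 ≤ t → ∀ x w z, |w - x| ≤ B * (t - 1) * |z - x| →
      |F w - F x| ≤ ε * t ^ A * |F z - F x| := by
  obtain ⟨δ, hδ, hsmall⟩ := hF.exists_abs_sub_le_of_abs_le hε
  obtain ⟨p, hpoly⟩ := hF.exists_abs_sub_le_mul_pow
  have hB0 : 0 < B := one_pos.trans_le hB
  -- For `t` near `1` the bound is already small; otherwise a power of `t` absorbs all constants.
  obtain ⟨l, hl⟩ := pow_unbounded_of_one_lt (H * (2 * B) ^ p / ε)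
    (lt_add_of_pos_right 1 (div_pos hδ hB0))
  refine ⟨l + p, fun t ht x w z h => ?_⟩
  rcases le_or_gt (B * (t - 1)) δ with hle | hgt
  · calc |F w - F x| ≤ ε * |F z - F x| :=
          hsmall x w z (h.trans (mul_le_mul_of_nonneg_right hle (abs_nonneg _)))
      _ ≤ ε * t ^ (l + p) * |F z - F x| :=
          mul_le_mul_of_nonneg_right (le_mul_of_one_le_right hε.le (one_le_pow₀ ht))
            (abs_nonneg _)
  · have hδt : 1 + δ / B ≤ t := by
      have := (div_lt_iff₀' hB0).2 hgt
      linarith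
    have hconst : H * (2 * B) ^ p ≤ ε * t ^ l := by
      rw [mul_comm ε, ← div_le_iff₀ hε]
      exact hl.le.trans (pow_le_pow_left₀ (by positivity) hδt l)
    have hw : |w - x| ≤ B * t * |z - x| :=
      h.trans (mul_le_mul_of_nonneg_right (by nlinarith) (abs_nonneg _))
    calc |F w - F x| ≤ H * (2 * (B * t)) ^ p * |F z - F x| :=
          hpoly _ (one_le_mul_of_one_le_of_one_le hB ht) x w z hw
      _ = H * (2 * B) ^ p * t ^ p * |F z - F x| := by rw [← mul_assoc 2, mul_pow _ t]; ring
      _ ≤ ε * t ^ l * t ^ p * |F z - F x| := by gcongr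
      _ = ε * t ^ (l + p) * |F z - F x| := by rw [pow_add]; ring

end IsBeurlingAhlfors

namespace IsQuasisymmetric

theorem exists_isBeurlingAhlfors {f : ℝ ≃ₜ ℝ} (hf : IsQuasisymmetric f) (hmono : StrictMono f) :
    ∃ H, IsBeurlingAhlfors f H := by
  obtain ⟨h, hh⟩ := hf
  refine ⟨h ⟨1, mem_Ici.2 zero_le_one⟩, hmono, fun x r => ?_⟩
  rcases eq_or_ne r 0 with rfl | hr
  · simp only [add_zero, sub_self, sub_zero, abs_zero, mul_zero, le_refl]
  have hne : f (x - r) ≠ f x := hmono.injective.ne (mt sub_eq_self.1 hr)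
  have hle := hh (x + r) (x - r) x (by grind) (by grind) (by grind)
  rw [abs_sub_comm (f x), abs_sub_comm (f x), div_le_iff₀ (abs_pos.2 (sub_ne_zero.2 hne))] at hle
  simpa only [sub_add_cancel_left, sub_sub_cancel, abs_neg, div_self (abs_ne_zero.2 hr)] using hle

theorem trans_neg {f : ℝ ≃ₜ ℝ} (hf : IsQuasisymmetric f) :
    IsQuasisymmetric (f.trans (Homeomorph.neg ℝ)) := by
  obtain ⟨h, hh⟩ := hf
  refine ⟨h, fun a b x hxa hxb hab => ?_⟩
  simpa only [Homeomorph.trans_apply, Homeomorph.coe_neg, neg_sub_neg, abs_sub_comm] using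
    hh a b x hxa hxb hab

end IsQuasisymmetric

/-- Addresses of the vertices of the rooted tree in which a vertex of depth `k` has the children
`0, …, m k - 1`. The most recent choice comes first: the children of `L` are `j :: L`. -/
def IsAddress (m : ℕ → ℕ) : List ℕ → Prop
  | [] => True
  | j :: L => IsAddress m L ∧ j < m L.length

/-- The addresses of depth `k`. -/
def addresses (m : ℕ → ℕ) : ℕ → Finset (List ℕ)
  | 0 => {[]}
  | k + 1 => (addresses m k ×ˢ Finset.range (m k)).image fun p => p.2 :: p.1

theorem mem_addresses {m : ℕ → ℕ} {k : ℕ} {L : List ℕ} :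
    L ∈ addresses m k ↔ IsAddress m L ∧ L.length = k := by
  induction k generalizing L with
  | zero =>
    rw [addresses, Finset.mem_singleton, List.length_eq_zero_iff]
    exact ⟨fun h => ⟨h ▸ trivial, h⟩, And.right⟩
  | succ k ih =>
    simp only [addresses, Finset.mem_image, Finset.mem_product, Finset.mem_range, ih, Prod.exists]
    constructor
    · rintro ⟨L, j, ⟨⟨hL, rfl⟩, hj⟩, rfl⟩
      exact ⟨⟨hL, hj⟩, rfl⟩
    · rintro ⟨hL, hlen⟩
      obtain ⟨j, L, rfl⟩ := List.exists_cons_of_length_eq_add_one hlen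
      obtain rfl := Nat.succ_injective hlen
      exact ⟨L, j, ⟨⟨hL.1, rfl⟩, hL.2⟩, rfl⟩

theorem card_addresses_le (m : ℕ → ℕ) (k : ℕ) :
    (addresses m k).card ≤ ∏ i ∈ Finset.range k, m i := by
  induction k with
  | zero => rfl
  | succ k ih =>
    calc (addresses m (k + 1)).card ≤ (addresses m k ×ˢ Finset.range (m k)).card :=
          Finset.card_image_le
      _ = (addresses m k).card * m k := by rw [Finset.card_product, Finset.card_range]
      _ ≤ ∏ i ∈ Finset.range (k + 1), m i := by
          rw [Finset.prod_range_succ]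
          exact Nat.mul_le_mul_right _ ih

theorem isAddress_replicate_zero {m : ℕ → ℕ} (hm : ∀ k, 0 < m k) (k : ℕ) :
    IsAddress m (List.replicate k 0) := by
  induction k with
  | zero => trivial
  | succ k ih => exact ⟨ih, hm _⟩

/-- Nested intervals `[left L, right L]` indexed by addresses, those of depth `k` having the common
length `length k`. The points `left L = cut L 0 ≤ cut L 1 ≤ … ≤ cut L (m L.length) = right L` divide
the interval of `L` into cells, the `j`-th of which contains the interval of `j :: L`. -/
structure IntervalTree (m : ℕ → ℕ) where
  left : List ℕ → ℝ
  right : List ℕ → ℝ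
  cut : List ℕ → ℕ → ℝ
  length : ℕ → ℝ
  two_le : ∀ k, 2 ≤ m k
  length_pos : ∀ k, 0 < length k
  right_sub_left : ∀ L, IsAddress m L → right L - left L = length L.length
  cut_zero : ∀ L, cut L 0 = left L
  cut_last : ∀ L, cut L (m L.length) = right L
  cut_le_left : ∀ L j, IsAddress m (j :: L) → cut L j ≤ left (j :: L)
  right_le_cut : ∀ L j, IsAddress m (j :: L) → right (j :: L) ≤ cut L (j + 1)

namespace IntervalTree

variable {m : ℕ → ℕ} (T : IntervalTree m) {L : List ℕ} {i j : ℕ}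

/-- The interval at the vertex with address `L`. -/
def interval (L : List ℕ) : Set ℝ := Icc (T.left L) (T.right L)

/-- The points lying, for every `k`, in some interval of depth `k`. -/
def limitSet : Set ℝ := ⋂ k, ⋃ L ∈ addresses m k, T.interval L

theorem left_lt_right (hL : IsAddress m L) : T.left L < T.right L :=
  sub_pos.1 (T.right_sub_left L hL ▸ T.length_pos _)

theorem length_le_cut_sub_cut (hL : IsAddress m (j :: L)) :
    T.length (L.length + 1) ≤ T.cut L (j + 1) - T.cut L j := by
  linarith [T.right_sub_left _ hL, T.cut_le_left L j hL, T.right_le_cut L j hL,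
    congrArg T.length (List.length_cons (a := j) (as := L))]

theorem cut_le_cut (hL : IsAddress m L) (hij : i ≤ j) (hj : j ≤ m L.length) :
    T.cut L i ≤ T.cut L j := by
  induction j, hij using Nat.le_induction with
  | base => rfl
  | succ j _ ih =>
    linarith [ih (by omega), T.length_le_cut_sub_cut (j := j) ⟨hL, hj⟩,
      T.length_pos (L.length + 1)]

theorem left_le_cut (hL : IsAddress m L) (hj : j ≤ m L.length) : T.left L ≤ T.cut L j :=
  T.cut_zero L ▸ T.cut_le_cut hL j.zero_le hj

theorem cut_le_right (hL : IsAddress m L) (hj : j ≤ m L.length) : T.cut L j ≤ T.right L :=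
  T.cut_last L ▸ T.cut_le_cut hL hj le_rfl

theorem left_le_left_cons (hL : IsAddress m (j :: L)) : T.left L ≤ T.left (j :: L) :=
  (T.left_le_cut hL.1 hL.2.le).trans (T.cut_le_left L j hL)

theorem right_cons_le_right (hL : IsAddress m (j :: L)) : T.right (j :: L) ≤ T.right L :=
  (T.right_le_cut L j hL).trans (T.cut_le_right hL.1 hL.2)

theorem branching_pos (T : IntervalTree m) (k : ℕ) : 0 < m k := two_pos.trans_le (T.two_le k)

theorem mul_length_succ_le (k : ℕ) : m k * T.length (k + 1) ≤ T.length k := by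
  have hL := isAddress_replicate_zero T.branching_pos k
  have hlen : (List.replicate k 0).length = k := List.length_replicate
  have hcell : ∀ j ∈ Finset.range (m k), T.length (k + 1) ≤
      T.cut (List.replicate k 0) (j + 1) - T.cut (List.replicate k 0) j := fun j hj => by
    simpa only [hlen] using T.length_le_cut_sub_cut (L := List.replicate k 0)
      ⟨hL, hlen.symm ▸ Finset.mem_range.1 hj⟩
  have hsum := Finset.card_nsmul_le_sum _ _ _ hcell
  have hlast := T.cut_last (List.replicate k 0)
  rw [hlen] at hlast
  rwa [Finset.sum_range_sub, Finset.card_range, nsmul_eq_mul, hlast, T.cut_zero,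
    T.right_sub_left _ hL, hlen] at hsum

theorem two_mul_length_succ_le (k : ℕ) : 2 * T.length (k + 1) ≤ T.length k :=
  (mul_le_mul_of_nonneg_right (by exact_mod_cast T.two_le k) (T.length_pos _).le).trans
    (T.mul_length_succ_le k)

theorem two_pow_mul_length_le (k : ℕ) : 2 ^ k * T.length k ≤ T.length 0 := by
  induction k with
  | zero => rw [pow_zero, one_mul]
  | succ k ih =>
    have hpow : (0 : ℝ) < 2 ^ k := by positivity
    rw [pow_succ]
    nlinarith [T.two_mul_length_succ_le k]

theorem tendsto_length : Tendsto T.length atTop (nhds 0) := by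
  refine squeeze_zero (fun k => (T.length_pos k).le) (fun k => ?_) (g := fun k =>
    T.length 0 * (1 / 2) ^ k) ?_
  · rw [one_div, inv_pow, ← div_eq_mul_inv, le_div_iff₀' (by positivity)]
    exact T.two_pow_mul_length_le k
  · simpa only [mul_zero] using (tendsto_pow_atTop_nhds_zero_of_lt_one (r := (1 / 2 : ℝ))
      (by norm_num) (by norm_num)).const_mul (T.length 0)

theorem ediam_interval (hL : IsAddress m L) :
    Metric.ediam (T.interval L) = ENNReal.ofReal (T.length L.length) := by
  rw [interval, Real.ediam_Icc, T.right_sub_left L hL]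

theorem eventually_one_le_prod_mul_rpow {s : NNReal} (hs : s < dimH T.limitSet) :
    ∀ᶠ k in atTop, 1 ≤ (∏ i ∈ Finset.range k, m i : ℝ) * T.length k ^ (s : ℝ) := by
  by_contra hfreq
  refine hs.not_ge (dimH_le_of_frequently_card_mul_rpow_le (ι := fun k => addresses m k)
    (t := fun k L => T.interval L) (r := fun k => ENNReal.ofReal (T.length k))
    (ENNReal.ofReal_zero ▸ ENNReal.tendsto_ofReal T.tendsto_length) ?_ ?_
    ((not_eventually.1 hfreq).mono fun k hk => ?_))
  · rintro k ⟨L, hL⟩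
    obtain ⟨haddr, rfl⟩ := mem_addresses.1 hL
    exact (T.ediam_interval haddr).le
  · intro k x hx
    simpa only [mem_iUnion, Subtype.exists, exists_prop] using mem_iInter.1 hx k
  · have hcard : (Fintype.card (addresses m k) : ℝ) ≤ ∏ i ∈ Finset.range k, (m i : ℝ) := by
      rw [Fintype.card_coe]
      exact_mod_cast card_addresses_le m k
    have hpow : 0 ≤ T.length k ^ (s : ℝ) := Real.rpow_nonneg (T.length_pos k).le _
    rw [ENNReal.ofReal_rpow_of_pos (T.length_pos k), ← ENNReal.ofReal_natCast,
      ← ENNReal.ofReal_mul (Nat.cast_nonneg _), ENNReal.ofReal_le_one]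
    exact (mul_le_mul_of_nonneg_right hcard hpow).trans (not_le.1 hk).le

end IntervalTree

/-- The affine copy on `p` of the position of `F t` between `F a` and `F b`. -/
noncomputable def rescale (F : ℝ → ℝ) (a b : ℝ) (p : ℝ × ℝ) (t : ℝ) : ℝ :=
  p.1 + (p.2 - p.1) * ((F t - F a) / (F b - F a))

theorem rescale_left (F : ℝ → ℝ) (a b : ℝ) (p : ℝ × ℝ) : rescale F a b p a = p.1 := by
  rw [rescale, sub_self, zero_div, mul_zero, add_zero]

theorem rescale_right {F : ℝ → ℝ} {a b : ℝ} (hab : F a ≠ F b) (p : ℝ × ℝ) :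
    rescale F a b p b = p.2 := by
  rw [rescale, div_self (sub_ne_zero.2 hab.symm), mul_one, add_sub_cancel]

theorem rescale_sub_rescale (F : ℝ → ℝ) (a b : ℝ) (p : ℝ × ℝ) (s t : ℝ) :
    rescale F a b p t - rescale F a b p s = (p.2 - p.1) * ((F t - F s) / (F b - F a)) := by
  simp only [rescale]
  ring

theorem exists_le_and_le_succ {n : ℕ} {p : ℕ → ℝ} {y : ℝ} (hn : 0 < n) (h0 : p 0 ≤ y)
    (hy : y ≤ p n) : ∃ j < n, p j ≤ y ∧ y ≤ p (j + 1) := by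
  induction n, hn using Nat.le_induction with
  | base => exact ⟨0, one_pos, h0, hy⟩
  | succ n _ ih =>
    rcases le_total (p n) y with hle | hle
    · exact ⟨n, n.lt_succ_self, hle, hy⟩
    · obtain ⟨j, hj, hpj⟩ := ih hle
      exact ⟨j, hj.trans n.lt_succ_self, hpj⟩

namespace IntervalTree

variable {m : ℕ → ℕ} (T : IntervalTree m) {F : ℝ → ℝ} {L : List ℕ} {i j : ℕ} {d : NNReal}
  {H M x x' y y' s t : ℝ} {ω ω' : ℕ → ℕ}

/-- The endpoints of the mass interval of an address: `[0, 1]` at the root, and the cells of `L`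
divide the mass interval of `L` in proportion to the lengths of their images under `F`. The
measure on the tree that this describes gives `L` the length of its mass interval as mass. -/
noncomputable def massInterval (F : ℝ → ℝ) : List ℕ → ℝ × ℝ
  | [] => (0, 1)
  | j :: L =>
    (rescale F (T.left L) (T.right L) (massInterval F L) (T.cut L j),
      rescale F (T.left L) (T.right L) (massInterval F L) (T.cut L (j + 1)))

/-- The length of the mass interval of `L`. -/
noncomputable def mass (F : ℝ → ℝ) (L : List ℕ) : ℝ :=
  (T.massInterval F L).2 - (T.massInterval F L).1

/-- The increment of `F` over the interval of `L`. -/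
noncomputable def imageLength (F : ℝ → ℝ) (L : List ℕ) : ℝ := F (T.right L) - F (T.left L)

/-- A Frostman condition of exponent `d` for the masses of the image intervals under `F`. -/
def IsFrostman (F : ℝ → ℝ) (M d : ℝ) : Prop :=
  ∀ L, IsAddress m L → T.mass F L ≤ M * T.imageLength F L ^ d

/-- The branch `ω` of the tree leads to `x` in the intervals and to `y` in the mass intervals. -/
structure Codes (F : ℝ → ℝ) (ω : ℕ → ℕ) (x y : ℝ) : Prop where
  isAddress : ∀ k, IsAddress m (PiNat.res ω k)
  mem_interval : ∀ k, x ∈ T.interval (PiNat.res ω k)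
  mem_massInterval : ∀ k,
    y ∈ Icc (T.massInterval F (PiNat.res ω k)).1 (T.massInterval F (PiNat.res ω k)).2

theorem mass_cons (F : ℝ → ℝ) (j : ℕ) (L : List ℕ) : T.mass F (j :: L) = T.mass F L *
    ((F (T.cut L (j + 1)) - F (T.cut L j)) / T.imageLength F L) :=
  rescale_sub_rescale ..

theorem imageLength_pos (hF : StrictMono F) (hL : IsAddress m L) : 0 < T.imageLength F L :=
  sub_pos.2 (hF (T.left_lt_right hL))

theorem mass_pos (hF : StrictMono F) (hL : IsAddress m L) : 0 < T.mass F L := by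
  induction L with
  | nil => simp only [mass, massInterval, sub_zero, zero_lt_one]
  | cons j L ih =>
    have hcell : T.cut L j < T.cut L (j + 1) :=
      sub_pos.1 ((T.length_pos _).trans_le (T.length_le_cut_sub_cut hL))
    rw [mass_cons]
    exact mul_pos (ih hL.1) (div_pos (sub_pos.2 (hF hcell)) (T.imageLength_pos hF hL.1))

theorem massInterval_cons_zero_fst (F : ℝ → ℝ) (L : List ℕ) :
    (T.massInterval F (0 :: L)).1 = (T.massInterval F L).1 := by
  rw [massInterval, T.cut_zero, rescale_left]

theorem massInterval_cons_last_snd (hF : StrictMono F) (hL : IsAddress m L)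
    (hj : j + 1 = m L.length) : (T.massInterval F (j :: L)).2 = (T.massInterval F L).2 := by
  rw [massInterval, hj, T.cut_last, rescale_right (hF (T.left_lt_right hL)).ne]

theorem massInterval_snd_le_fst (hF : StrictMono F) (hi : IsAddress m (i :: L))
    (hj : IsAddress m (j :: L)) (hij : i < j) :
    (T.massInterval F (i :: L)).2 ≤ (T.massInterval F (j :: L)).1 := by
  rw [← sub_nonneg]
  simp only [massInterval]
  rw [rescale_sub_rescale]
  exact mul_nonneg (T.mass_pos hF hi.1).le (div_nonneg
    (sub_nonneg.2 (hF.monotone (T.cut_le_cut hi.1 hij hj.2.le)))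
    (T.imageLength_pos hF hi.1).le)

theorem exists_mem_massInterval_cons (hF : StrictMono F) (hL : IsAddress m L)
    (hy : y ∈ Icc (T.massInterval F L).1 (T.massInterval F L).2) :
    ∃ j, IsAddress m (j :: L) ∧
      y ∈ Icc (T.massInterval F (j :: L)).1 (T.massInterval F (j :: L)).2 := by
  obtain ⟨j, hj, hyj⟩ := exists_le_and_le_succ (y := y) (T.branching_pos L.length)
    (p := fun j => rescale F (T.left L) (T.right L) (T.massInterval F L) (T.cut L j))
    (by simpa only [T.cut_zero, rescale_left] using hy.1)
    (by simpa only [T.cut_last, rescale_right (hF (T.left_lt_right hL)).ne] using hy.2)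
  exact ⟨j, ⟨hL, hj⟩, hyj⟩

theorem exists_mem_interval (hω : ∀ k, IsAddress m (PiNat.res ω k)) :
    ∃ x, ∀ k, x ∈ T.interval (PiNat.res ω k) := by
  have hsub : Antitone fun k => T.interval (PiNat.res ω k) := antitone_nat_of_succ_le fun k =>
    Icc_subset_Icc (T.left_le_left_cons (hω (k + 1))) (T.right_cons_le_right (hω (k + 1)))
  exact ⟨_, mem_iInter.1 (ciSup_mem_iInter_Icc_of_antitone_Icc hsub
    fun k => (T.left_lt_right (hω k)).le)⟩

theorem exists_codes (hF : StrictMono F) (hy : y ∈ Icc (0 : ℝ) 1) :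
    ∃ ω x, T.Codes F ω x y := by
  obtain ⟨ω, hω⟩ := exists_forall_res (P := fun L => IsAddress m L ∧
      y ∈ Icc (T.massInterval F L).1 (T.massInterval F L).2) ⟨trivial, hy⟩
    fun L hL => (T.exists_mem_massInterval_cons hF hL.1 hL.2).imp fun _ => id
  obtain ⟨x, hx⟩ := T.exists_mem_interval fun k => (hω k).1
  exact ⟨ω, x, fun k => (hω k).1, hx, fun k => (hω k).2⟩

variable {T}

theorem Codes.mem_limitSet (h : T.Codes F ω x y) : x ∈ T.limitSet :=
  mem_iInter.2 fun k => mem_biUnion (mem_addresses.2 ⟨h.isAddress k, PiNat.res_length ω k⟩)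
    (h.mem_interval k)

namespace IsFrostman

theorem nonneg (hT : T.IsFrostman F M d) (hF : StrictMono F) : 0 ≤ M :=
  (pos_of_mul_pos_left ((T.mass_pos hF (L := []) trivial).trans_le (hT [] trivial))
    (Real.rpow_nonneg (T.imageLength_pos hF (L := []) trivial).le _)).le

theorem rescale_sub_rescale_le (hT : T.IsFrostman F M d) (hF : StrictMono F) (hd : d ≤ 1)
    (hL : IsAddress m L) (hs : T.left L ≤ s) (hst : s ≤ t) (ht : t ≤ T.right L) :
    rescale F (T.left L) (T.right L) (T.massInterval F L) t -
      rescale F (T.left L) (T.right L) (T.massInterval F L) s ≤ M * (F t - F s) ^ (d : ℝ) := by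
  set X := T.imageLength F L
  have hX : 0 < X := T.imageLength_pos hF hL
  have hmono := hF.monotone
  have hle : F t - F s ≤ X := sub_le_sub (hmono ht) (hmono hs)
  have hratio0 : 0 ≤ (F t - F s) / X := div_nonneg (sub_nonneg.2 (hmono hst)) hX.le
  have hratio1 : (F t - F s) / X ≤ 1 := (div_le_one hX).2 hle
  have hpow : (F t - F s) / X ≤ ((F t - F s) / X) ^ (d : ℝ) := by
    simpa only [Real.rpow_one] using
      Real.rpow_le_rpow_of_exponent_ge' hratio0 hratio1 d.coe_nonneg (NNReal.coe_le_one.2 hd)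
  have hM := hT.nonneg hF
  calc _ = T.mass F L * ((F t - F s) / X) := rescale_sub_rescale ..
    _ ≤ M * X ^ (d : ℝ) * ((F t - F s) / X) ^ (d : ℝ) :=
      mul_le_mul (hT L hL) hpow hratio0 (mul_nonneg hM (Real.rpow_nonneg hX.le _))
    _ = M * (F t - F s) ^ (d : ℝ) := by
      rw [mul_assoc, ← Real.mul_rpow hX.le hratio0, mul_div_cancel₀ _ hX.ne']

theorem mass_le_mul_abs_sub_rpow (hT : T.IsFrostman F M d) (hF : IsBeurlingAhlfors F H)
    (hL : IsAddress m L) (hx : x ∈ T.interval L) {z : ℝ} (hz : T.length L.length ≤ |z - x|) :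
    T.mass F L ≤ M * (2 * H) ^ (d : ℝ) * |F z - F x| ^ (d : ℝ) := by
  have hM := hT.nonneg hF.strictMono
  have hFL := (T.imageLength_pos hF.strictMono hL).le
  rw [mul_assoc, ← Real.mul_rpow (by linarith [hF.pos]) (abs_nonneg _)]
  refine (hT L hL).trans (mul_le_mul_of_nonneg_left (Real.rpow_le_rpow hFL ?_ d.coe_nonneg) hM)
  exact hF.sub_le_two_mul_abs_sub hx.1 hx.2 ((T.right_sub_left L hL).trans_le hz)

theorem tendsto_mass (hT : T.IsFrostman F M d) (hF : IsBeurlingAhlfors F H) (hd : 0 < d)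
    (hω : ∀ k, IsAddress m (PiNat.res ω k)) :
    Tendsto (fun k => T.mass F (PiNat.res ω k)) atTop (nhds 0) := by
  obtain ⟨θ, ⟨hθ0, hθ1⟩, hpow⟩ := hF.exists_sub_le_pow_mul
  have hM := hT.nonneg hF.strictMono
  set X := T.imageLength F []
  have hroot : ∀ k, T.left [] ≤ T.left (PiNat.res ω k) ∧ T.right (PiNat.res ω k) ≤ T.right [] :=
    fun k => by
      induction k with
      | zero => exact ⟨le_rfl, le_rfl⟩
      | succ k ih => exact ⟨ih.1.trans (T.left_le_left_cons (hω (k + 1))),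
          (T.right_cons_le_right (hω (k + 1))).trans ih.2⟩
  have hbound : ∀ k, T.mass F (PiNat.res ω k) ≤ M * (θ ^ k * X) ^ (d : ℝ) := fun k => by
    have hlt := T.left_lt_right (hω k)
    refine (hT _ (hω k)).trans (mul_le_mul_of_nonneg_left (Real.rpow_le_rpow
      (T.imageLength_pos hF.strictMono (hω k)).le ?_ d.coe_nonneg) hM)
    refine hpow k _ _ _ _ (hroot k).1 hlt.le (hroot k).2 ?_
    rw [T.right_sub_left _ (hω k), T.right_sub_left [] trivial, PiNat.res_length]
    exact T.two_pow_mul_length_le k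
  refine squeeze_zero (fun k => (T.mass_pos hF.strictMono (hω k)).le) hbound ?_
  have hlim : Tendsto (fun k => θ ^ k * X) atTop (nhds 0) := by
    simpa only [zero_mul] using (tendsto_pow_atTop_nhds_zero_of_lt_one hθ0.le hθ1).mul_const X
  simpa only [Real.zero_rpow (NNReal.coe_pos.2 hd).ne', mul_zero] using
    (hlim.rpow_const (Or.inr d.coe_nonneg)).const_mul M

theorem snd_sub_le (hT : T.IsFrostman F M d) (hF : IsBeurlingAhlfors F H) (hd : d ≤ 1)
    (hL : IsAddress m (j :: L)) (hx : x ∈ T.interval (j :: L))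
    (hy : (T.massInterval F (j :: L)).1 ≤ y) (hj : j + 1 < m L.length) :
    (T.massInterval F L).2 - y ≤
      M * (1 + (2 * H) ^ (d : ℝ)) * (F (T.right L) - F x) ^ (d : ℝ) := by
  have hmono := hF.strictMono.monotone
  have hM := hT.nonneg hF.strictMono
  have hnext := T.length_le_cut_sub_cut (j := j + 1) ⟨hL.1, hj⟩
  have hxcut : x ≤ T.cut L (j + 1) := hx.2.trans (T.right_le_cut L j hL)
  have hcut : T.cut L (j + 1 + 1) ≤ T.right L := T.cut_le_right hL.1 hj
  have hcut' : T.cut L (j + 1) ≤ T.right L := T.cut_le_right hL.1 hj.le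
  have hxright : x ≤ T.right L := hxcut.trans hcut'
  have hcells : (T.massInterval F L).2 - (T.massInterval F (j :: L)).2 ≤
      M * (F (T.right L) - F x) ^ (d : ℝ) := calc
    _ ≤ M * (F (T.right L) - F (T.cut L (j + 1))) ^ (d : ℝ) := by
      simpa only [massInterval, rescale_right (hF.strictMono (T.left_lt_right hL.1)).ne] using
        hT.rescale_sub_rescale_le hF.strictMono hd hL.1 (T.left_le_cut hL.1 hj.le) hcut' le_rfl
    _ ≤ _ := mul_le_mul_of_nonneg_left (Real.rpow_le_rpow (sub_nonneg.2 (hmono hcut'))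
      (sub_le_sub_left (hmono hxcut) _) d.coe_nonneg) hM
  have hmass := hT.mass_le_mul_abs_sub_rpow hF hL hx (z := T.right L)
    (by rw [abs_of_nonneg (sub_nonneg.2 hxright), List.length_cons]; linarith)
  rw [abs_of_nonneg (sub_nonneg.2 (hmono hxright)), mass] at hmass
  linarith

theorem sub_fst_le (hT : T.IsFrostman F M d) (hF : IsBeurlingAhlfors F H) (hd : d ≤ 1)
    (hL : IsAddress m (j :: L)) (hx : x ∈ T.interval (j :: L))
    (hy : y ≤ (T.massInterval F (j :: L)).2) (hj : j ≠ 0) :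
    y - (T.massInterval F L).1 ≤
      M * (1 + (2 * H) ^ (d : ℝ)) * (F x - F (T.left L)) ^ (d : ℝ) := by
  have hmono := hF.strictMono.monotone
  have hM := hT.nonneg hF.strictMono
  obtain ⟨i, rfl⟩ := Nat.exists_eq_succ_of_ne_zero hj
  have hprev := T.length_le_cut_sub_cut (j := i) ⟨hL.1, i.lt_succ_self.trans hL.2⟩
  have hcutx : T.cut L (i + 1) ≤ x := (T.cut_le_left L (i + 1) hL).trans hx.1
  have hcut : T.left L ≤ T.cut L i := T.left_le_cut hL.1 (i.lt_succ_self.trans hL.2).le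
  have hcut' : T.left L ≤ T.cut L (i + 1) := T.left_le_cut hL.1 hL.2.le
  have hleftx : T.left L ≤ x := hcut'.trans hcutx
  have hcells : (T.massInterval F ((i + 1) :: L)).1 - (T.massInterval F L).1 ≤
      M * (F x - F (T.left L)) ^ (d : ℝ) := calc
    _ ≤ M * (F (T.cut L (i + 1)) - F (T.left L)) ^ (d : ℝ) := by
      simpa only [massInterval, rescale_left] using
        hT.rescale_sub_rescale_le hF.strictMono hd hL.1 le_rfl hcut' (T.cut_le_right hL.1 hL.2.le)
    _ ≤ _ := mul_le_mul_of_nonneg_left (Real.rpow_le_rpow (sub_nonneg.2 (hmono hcut'))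
      (sub_le_sub_right (hmono hcutx) _) d.coe_nonneg) hM
  have hmass := hT.mass_le_mul_abs_sub_rpow hF hL hx (z := T.left L)
    (by rw [abs_of_nonpos (sub_nonpos.2 hleftx), List.length_cons]; linarith)
  rw [abs_of_nonpos (sub_nonpos.2 (hmono hleftx)), neg_sub, mass] at hmass
  linarith

theorem mul_one_add_rpow_nonneg (hT : T.IsFrostman F M d) (hF : IsBeurlingAhlfors F H) :
    0 ≤ M * (1 + (2 * H) ^ (d : ℝ)) := by
  have hM := hT.nonneg hF.strictMono
  have hH := hF.pos
  positivity

theorem codes_snd_sub_le (hT : T.IsFrostman F M d) (hF : IsBeurlingAhlfors F H) (hd0 : 0 < d)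
    (hd : d ≤ 1) (h : T.Codes F ω x y) (k : ℕ) :
    (T.massInterval F (PiNat.res ω k)).2 - y ≤
      M * (1 + (2 * H) ^ (d : ℝ)) * (F (T.right (PiNat.res ω k)) - F x) ^ (d : ℝ) := by
  have hmono := hF.strictMono.monotone
  have hnonneg : ∀ k, 0 ≤ F (T.right (PiNat.res ω k)) - F x :=
    fun k => sub_nonneg.2 (hmono (h.mem_interval k).2)
  refine le_of_tendsto_zero_of_le_or_step (v := fun k => _ * (_ : ℝ) ^ (d : ℝ))
    (squeeze_zero (fun k => sub_nonneg.2 (h.mem_massInterval k).2)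
      (fun k => sub_le_sub_left (h.mem_massInterval k).1 _) (hT.tendsto_mass hF hd0 h.isAddress))
    (fun k => mul_nonneg (hT.mul_one_add_rpow_nonneg hF) (Real.rpow_nonneg (hnonneg k) _))
    (fun k => ?_) k
  have hL : IsAddress m (ω k :: PiNat.res ω k) := h.isAddress (k + 1)
  rcases (Nat.succ_le_of_lt hL.2).lt_or_eq with hj | hj
  · exact .inl (hT.snd_sub_le hF hd hL (h.mem_interval (k + 1)) (h.mem_massInterval (k + 1)).1 hj)
  · refine .inr ⟨(congrArg (· - y)
      (T.massInterval_cons_last_snd hF.strictMono hL.1 hj)).ge, ?_⟩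
    exact mul_le_mul_of_nonneg_left (Real.rpow_le_rpow (hnonneg (k + 1))
      (sub_le_sub_right (hmono (T.right_cons_le_right hL)) _) d.coe_nonneg)
      (hT.mul_one_add_rpow_nonneg hF)

theorem codes_sub_fst_le (hT : T.IsFrostman F M d) (hF : IsBeurlingAhlfors F H) (hd0 : 0 < d)
    (hd : d ≤ 1) (h : T.Codes F ω x y) (k : ℕ) :
    y - (T.massInterval F (PiNat.res ω k)).1 ≤
      M * (1 + (2 * H) ^ (d : ℝ)) * (F x - F (T.left (PiNat.res ω k))) ^ (d : ℝ) := by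
  have hmono := hF.strictMono.monotone
  have hnonneg : ∀ k, 0 ≤ F x - F (T.left (PiNat.res ω k)) :=
    fun k => sub_nonneg.2 (hmono (h.mem_interval k).1)
  refine le_of_tendsto_zero_of_le_or_step (v := fun k => _ * (_ : ℝ) ^ (d : ℝ))
    (squeeze_zero (fun k => sub_nonneg.2 (h.mem_massInterval k).1)
      (fun k => sub_le_sub_right (h.mem_massInterval k).2 _) (hT.tendsto_mass hF hd0 h.isAddress))
    (fun k => mul_nonneg (hT.mul_one_add_rpow_nonneg hF) (Real.rpow_nonneg (hnonneg k) _))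
    (fun k => ?_) k
  have hL : IsAddress m (ω k :: PiNat.res ω k) := h.isAddress (k + 1)
  rcases eq_or_ne (ω k) 0 with hj | hj
  · refine .inr ⟨?_, mul_le_mul_of_nonneg_left (Real.rpow_le_rpow (hnonneg (k + 1))
      (sub_le_sub_left (hmono (T.left_le_left_cons hL)) _) d.coe_nonneg)
      (hT.mul_one_add_rpow_nonneg hF)⟩
    rw [PiNat.res_succ, hj, massInterval_cons_zero_fst]
  · exact .inl (hT.sub_fst_le hF hd hL (h.mem_interval (k + 1)) (h.mem_massInterval (k + 1)).2 hj)

theorem dist_le_of_lt (hT : T.IsFrostman F M d) (hF : IsBeurlingAhlfors F H) (hd0 : 0 < d)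
    (hd : d ≤ 1) (h : T.Codes F ω x y) (h' : T.Codes F ω' x' y') {k : ℕ}
    (hres : PiNat.res ω k = PiNat.res ω' k) (hlt : ω k < ω' k) :
    dist y y' ≤ M * (3 + 2 * (2 * H) ^ (d : ℝ)) * dist (F x) (F x') ^ (d : ℝ) := by
  have hmono := hF.strictMono.monotone
  have hM := hT.nonneg hF.strictMono
  have hC := hT.mul_one_add_rpow_nonneg hF
  have hL := h.isAddress (k + 1)
  have hL' := h'.isAddress (k + 1)
  have hx := h.mem_interval (k + 1)
  have hx' := h'.mem_interval (k + 1)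
  have hy := (h.mem_massInterval (k + 1)).2
  have hy' := (h'.mem_massInterval (k + 1)).1
  have hend := hT.codes_snd_sub_le hF hd0 hd h (k + 1)
  have hend' := hT.codes_sub_fst_le hF hd0 hd h' (k + 1)
  rw [PiNat.res_succ] at hL hx hy hend
  rw [PiNat.res_succ, ← hres] at hL' hx' hy' hend'
  set L := PiNat.res ω k
  have hcut : T.cut L (ω k + 1) ≤ T.cut L (ω' k) := T.cut_le_cut hL.1 hlt hL'.2.le
  have hright := T.right_le_cut L _ hL
  have hleft := T.cut_le_left L _ hL'
  have hmiddle : (T.massInterval F (ω' k :: L)).1 - (T.massInterval F (ω k :: L)).2 ≤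
      M * (F (T.cut L (ω' k)) - F (T.cut L (ω k + 1))) ^ (d : ℝ) :=
    hT.rescale_sub_rescale_le hF.strictMono hd hL.1 (T.left_le_cut hL.1 hL.2) hcut
      (T.cut_le_right hL.1 hL'.2.le)
  have hmiddle0 : (T.massInterval F (ω k :: L)).2 ≤ (T.massInterval F (ω' k :: L)).1 :=
    T.massInterval_snd_le_fst hF.strictMono hL hL' hlt
  have hpow : ∀ {a b}, x ≤ a → a ≤ b → b ≤ x' →
      (F b - F a) ^ (d : ℝ) ≤ (F x' - F x) ^ (d : ℝ) := fun hxa hab hbx' =>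
    Real.rpow_le_rpow (sub_nonneg.2 (hmono hab)) (sub_le_sub (hmono hbx') (hmono hxa)) d.coe_nonneg
  have hend_le := mul_le_mul_of_nonneg_left (hpow le_rfl hx.2 (by linarith [hx'.1])) hC
  have hend_le' := mul_le_mul_of_nonneg_left (hpow (by linarith [hx.2]) hx'.1 le_rfl) hC
  have hmiddle_le := mul_le_mul_of_nonneg_left
    (hpow (hx.2.trans hright) hcut (hleft.trans hx'.1)) hM
  have hxx' : F x ≤ F x' := hmono (by linarith [hx.2, hx'.1])
  rw [Real.dist_eq, Real.dist_eq, abs_sub_comm, abs_of_nonneg (by linarith), abs_sub_comm,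
    abs_of_nonneg (sub_nonneg.2 hxx')]
  linarith

theorem dist_le (hT : T.IsFrostman F M d) (hF : IsBeurlingAhlfors F H) (hd0 : 0 < d)
    (hd : d ≤ 1) (h : T.Codes F ω x y) (h' : T.Codes F ω' x' y') :
    dist y y' ≤ M * (3 + 2 * (2 * H) ^ (d : ℝ)) * dist (F x) (F x') ^ (d : ℝ) := by
  rcases eq_or_ne ω ω' with rfl | hne
  · have hle : ∀ k, dist y y' ≤ T.mass F (PiNat.res ω k) := fun k =>
      Real.dist_le_of_mem_Icc (h.mem_massInterval k) (h'.mem_massInterval k)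
    refine (ge_of_tendsto' (hT.tendsto_mass hF hd0 h.isAddress) hle).trans ?_
    have hM := hT.nonneg hF.strictMono
    have hH := hF.pos
    positivity
  · have hres : PiNat.res ω (PiNat.firstDiff ω ω') = PiNat.res ω' (PiNat.firstDiff ω ω') :=
      PiNat.res_eq_res.2 fun _ => PiNat.apply_eq_of_lt_firstDiff
    rcases (PiNat.apply_firstDiff_ne hne).lt_or_gt with hlt | hlt
    · exact hT.dist_le_of_lt hF hd0 hd h h' hres hlt
    · rw [dist_comm y, dist_comm (F x)]
      exact hT.dist_le_of_lt hF hd0 hd h' h hres.symm hlt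

theorem le_dimH_image (hT : T.IsFrostman F M d) (hF : IsBeurlingAhlfors F H) (hd0 : 0 < d)
    (hd : d ≤ 1) : d ≤ dimH (F '' T.limitSet) := by
  have hcode : ∀ y, ∃ x, y ∈ Icc (0 : ℝ) 1 → ∃ ω, T.Codes F ω x y := fun y => by
    by_cases hy : y ∈ Icc (0 : ℝ) 1
    · obtain ⟨ω, x, h⟩ := T.exists_codes hF.strictMono hy
      exact ⟨x, fun _ => ⟨ω, h⟩⟩
    · exact ⟨0, fun h => absurd h hy⟩
  choose g hg using hcode
  have hM := hT.nonneg hF.strictMono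
  have hH := hF.pos
  have hC : 0 ≤ M * (3 + 2 * (2 * H) ^ (d : ℝ)) := by positivity
  have hdim : dimH (Icc (0 : ℝ) 1) = 1 := by
    rw [Real.dimH_of_nonempty_interior (by simp only [interior_Icc, nonempty_Ioo, zero_lt_one]),
      Module.finrank_self, Nat.cast_one]
  have hle : dimH (Icc (0 : ℝ) 1) ≤ dimH ((F ∘ g) '' Icc 0 1) / d :=
    dimH_le_dimH_image_div_of_dist_le (C := ⟨_, hC⟩) hd0 fun y hy y' hy' => by
      obtain ⟨ω, h⟩ := hg y hy
      obtain ⟨ω', h'⟩ := hg y' hy'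
      exact hT.dist_le hF hd0 hd h h'
  have hsub : (F ∘ g) '' Icc 0 1 ⊆ F '' T.limitSet := by
    rintro _ ⟨y, hy, rfl⟩
    exact mem_image_of_mem F (hg y hy).choose_spec.mem_limitSet
  rw [hdim, ENNReal.le_div_iff_mul_le (.inl (by exact_mod_cast hd0.ne'))
    (.inl ENNReal.coe_ne_top), one_mul] at hle
  exact hle.trans (dimH_mono hsub)

end IsFrostman

end IntervalTree

namespace IntervalTree

variable {m : ℕ → ℕ} (T : IntervalTree m) {F : ℝ → ℝ} {L : List ℕ} {j : ℕ} {B H d ε : ℝ}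

/-- Within a cell, the gaps on both sides of the child interval are at most `B` times the average
difference in length between the cells and the child intervals. -/
def HasGapBound (B : ℝ) : Prop :=
  ∀ L j, IsAddress m (j :: L) →
    T.left (j :: L) - T.cut L j ≤
        B * (T.length L.length / m L.length - T.length (L.length + 1)) ∧
      T.cut L (j + 1) - T.right (j :: L) ≤
        B * (T.length L.length / m L.length - T.length (L.length + 1))

/-- The ratio of the length of an interval of depth `k` to the total length of its children. -/
noncomputable def slack (k : ℕ) : ℝ := T.length k / (m k * T.length (k + 1))

theorem branching_cast_pos (T : IntervalTree m) (k : ℕ) : (0 : ℝ) < m k :=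
  Nat.cast_pos.2 (T.branching_pos k)

theorem one_le_slack (k : ℕ) : 1 ≤ T.slack k :=
  (one_le_div (mul_pos (T.branching_cast_pos k) (T.length_pos _))).2 (T.mul_length_succ_le k)

theorem slack_sub_one_mul_length (k : ℕ) :
    (T.slack k - 1) * T.length (k + 1) = T.length k / m k - T.length (k + 1) := by
  have := T.branching_cast_pos k
  have := T.length_pos (k + 1)
  rw [slack]
  field_simp

theorem prod_branching_pos (T : IntervalTree m) (k : ℕ) :
    (0 : ℝ) < ∏ i ∈ Finset.range k, (m i : ℝ) :=
  Finset.prod_pos fun i _ => T.branching_cast_pos i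

theorem prod_slack (k : ℕ) : ∏ i ∈ Finset.range k, T.slack i =
    T.length 0 / ((∏ i ∈ Finset.range k, (m i : ℝ)) * T.length k) := by
  induction k with
  | zero => simp only [Finset.prod_range_zero, one_mul, div_self (T.length_pos 0).ne']
  | succ k ih =>
    have := T.branching_cast_pos k
    have := T.length_pos k
    have := T.length_pos (k + 1)
    have := T.prod_branching_pos k
    rw [Finset.prod_range_succ, Finset.prod_range_succ, ih, slack]
    field_simp

theorem exists_imageLength_cons_div_le (hF : IsBeurlingAhlfors F H) : ∃ q : ℝ, 0 < q ∧
    ∀ L j, IsAddress m (j :: L) →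
      T.imageLength F (j :: L) / T.imageLength F L ≤ (m L.length : ℝ) ^ (-q) := by
  obtain ⟨q, hq, hdecay⟩ := hF.exists_sub_le_rpow_neg_mul
  refine ⟨q, hq, fun L j hL => ?_⟩
  rw [div_le_iff₀ (T.imageLength_pos hF.strictMono hL.1)]
  refine hdecay (m L.length) (T.two_le _) _ _ _ _ (T.left_le_left_cons hL) (T.left_lt_right hL).le
    (T.right_cons_le_right hL) ?_
  rw [T.right_sub_left _ hL, T.right_sub_left _ hL.1]
  exact T.mul_length_succ_le L.length

variable {T}

namespace HasGapBound

theorem exists_image_cell_le (hT : T.HasGapBound B) (hF : IsBeurlingAhlfors F H) (hB : 1 ≤ B)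
    (hε : 0 < ε) : ∃ A : ℕ, ∀ L j, IsAddress m (j :: L) →
      F (T.cut L (j + 1)) - F (T.cut L j) ≤
        (1 + 2 * ε) * T.slack L.length ^ A * T.imageLength F (j :: L) := by
  obtain ⟨A, hA⟩ := hF.exists_abs_sub_le_mul_pow_of_abs_le hB hε
  refine ⟨A, fun L j hL => ?_⟩
  have hlt := T.left_lt_right hL
  have hcut := T.cut_le_left L j hL
  have hcut' := T.right_le_cut L j hL
  have hslack := T.one_le_slack L.length
  have hgap := hT L j hL
  have hlen : |T.right (j :: L) - T.left (j :: L)| = T.length (L.length + 1) := by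
    rw [abs_of_pos (sub_pos.2 hlt), T.right_sub_left _ hL, List.length_cons]
  rw [← slack_sub_one_mul_length, ← mul_assoc, ← hlen] at hgap
  have hleft := hA _ hslack (T.left (j :: L)) (T.cut L j) (T.right (j :: L))
    (by rw [abs_of_nonpos (sub_nonpos.2 hcut)]; linarith)
  have hright := hA _ hslack (T.right (j :: L)) (T.cut L (j + 1)) (T.left (j :: L))
    (by rw [abs_of_nonneg (sub_nonneg.2 hcut'), abs_sub_comm (T.left _)]; exact hgap.2)
  have himage := T.imageLength_pos hF.strictMono hL
  have hone : T.imageLength F (j :: L) ≤ T.slack L.length ^ A * T.imageLength F (j :: L) :=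
    le_mul_of_one_le_left himage.le (one_le_pow₀ hslack)
  rw [abs_sub_comm (F (T.left _))] at hright
  rw [← imageLength, abs_of_pos himage] at hleft hright
  have hcellL := neg_abs_le (F (T.cut L j) - F (T.left (j :: L)))
  have hcellR := le_abs_self (F (T.cut L (j + 1)) - F (T.right (j :: L)))
  have hsplit : F (T.cut L (j + 1)) - F (T.cut L j) = (F (T.cut L (j + 1)) - F (T.right (j :: L))) +
      T.imageLength F (j :: L) - (F (T.cut L j) - F (T.left (j :: L))) := by
    rw [imageLength]
    ring
  linarith

theorem exists_mass_cons_div_le (hT : T.HasGapBound B) (hF : IsBeurlingAhlfors F H) (hB : 1 ≤ B)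
    (hd : d < 1) : ∃ A : ℕ, ∃ γ : ℝ, 0 < γ ∧ ∀ L j, IsAddress m (j :: L) →
      T.mass F (j :: L) / T.imageLength F (j :: L) ^ d ≤
        T.mass F L / T.imageLength F L ^ d * (T.slack L.length ^ A * (m L.length : ℝ) ^ (-γ)) := by
  obtain ⟨q, hq, hdecay⟩ := T.exists_imageLength_cons_div_le hF
  set γ := q * (1 - d) / 2 with hγ
  have hγ0 : 0 < γ := half_pos (mul_pos hq (sub_pos.2 hd))
  have hε : 0 < ((2 : ℝ) ^ γ - 1) / 2 :=
    half_pos (sub_pos.2 (Real.one_lt_rpow one_lt_two hγ0))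
  obtain ⟨A, hcell⟩ := hT.exists_image_cell_le hF hB hε
  refine ⟨A, γ, hγ0, fun L j hL => ?_⟩
  set k := L.length
  set X := T.imageLength F L
  set Y := T.imageLength F (j :: L)
  have hX : 0 < X := T.imageLength_pos hF.strictMono hL.1
  have hY : 0 < Y := T.imageLength_pos hF.strictMono hL
  have hm : (0 : ℝ) < m k := T.branching_cast_pos k
  have hmass := T.mass_pos hF.strictMono hL.1
  have hslack : 0 < T.slack k ^ A := pow_pos (one_pos.trans_le (T.one_le_slack k)) A
  have hratio_pow : (Y / X) ^ (1 - d) ≤ (m k : ℝ) ^ (-(2 * γ)) := by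
    refine (Real.rpow_le_rpow (div_pos hY hX).le (hdecay L j hL) (sub_pos.2 hd).le).trans_eq ?_
    rw [← Real.rpow_mul hm.le, hγ]
    ring_nf
  have htwo : (2 : ℝ) ^ γ ≤ (m k : ℝ) ^ γ :=
    Real.rpow_le_rpow two_pos.le (by exact_mod_cast T.two_le k) hγ0.le
  calc T.mass F (j :: L) / Y ^ d
      ≤ T.mass F L * ((2 ^ γ * T.slack k ^ A * Y) / X) / Y ^ d := by
        have := hcell L j hL
        rw [mul_div_cancel₀ _ two_ne_zero, add_sub_cancel] at this
        rw [T.mass_cons]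
        gcongr
    _ = T.mass F L / X ^ d * (T.slack k ^ A * (2 ^ γ * (Y / X) ^ (1 - d))) := by
        rw [Real.rpow_sub (div_pos hY hX), Real.rpow_one, Real.div_rpow hY.le hX.le]
        field_simp
    _ ≤ T.mass F L / X ^ d * (T.slack k ^ A * ((m k : ℝ) ^ γ * (m k : ℝ) ^ (-(2 * γ)))) := by
        gcongr
    _ = T.mass F L / X ^ d * (T.slack k ^ A * (m k : ℝ) ^ (-γ)) := by
        rw [← Real.rpow_add hm]
        ring_nf

end HasGapBound

variable (T) in
theorem bddAbove_prod_slack_mul_rpow (hdim : dimH T.limitSet = 1) (A : ℕ) {γ : ℝ} (hγ : 0 < γ) :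
    BddAbove (range fun k => ∏ i ∈ Finset.range k, (T.slack i ^ A * (m i : ℝ) ^ (-γ))) := by
  have hAγ : 0 < A + γ := by positivity
  -- the exponent `s < 1` for which `(N * D ^ s) ^ (A + γ) = (N * D) ^ A * N ^ γ`
  let s : NNReal := ⟨A / (A + γ), by positivity⟩
  have hs : (s : ENNReal) < dimH T.limitSet := by
    rw [hdim, ENNReal.coe_lt_one_iff, ← NNReal.coe_lt_one]
    exact (div_lt_one hAγ).2 (by linarith)
  refine IsBoundedUnder.bddAbove_range ⟨T.length 0 ^ A, eventually_map.2 ?_⟩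
  filter_upwards [T.eventually_one_le_prod_mul_rpow hs] with k hk
  set N := ∏ i ∈ Finset.range k, (m i : ℝ)
  have hN : 0 < N := T.prod_branching_pos k
  have hD := T.length_pos k
  have hpow : 1 ≤ (N * T.length k) ^ A * N ^ γ := calc
    1 ≤ (N * T.length k ^ (s : ℝ)) ^ (A + γ) := Real.one_le_rpow hk hAγ.le
    _ = N ^ (A + γ) * T.length k ^ (A : ℝ) := by
      rw [Real.mul_rpow hN.le (by positivity), ← Real.rpow_mul hD.le]
      congr 2
      exact div_mul_cancel₀ _ hAγ.ne'
    _ = (N * T.length k) ^ A * N ^ γ := by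
      rw [Real.rpow_add hN, Real.rpow_natCast, Real.rpow_natCast, mul_pow]
      ring
  calc ∏ i ∈ Finset.range k, (T.slack i ^ A * (m i : ℝ) ^ (-γ))
      = (T.length 0 / (N * T.length k)) ^ A * N ^ (-γ) := by
        rw [Finset.prod_mul_distrib, Finset.prod_pow, T.prod_slack,
          Real.finsetProd_rpow _ _ fun i _ => Nat.cast_nonneg _]
    _ = T.length 0 ^ A / ((N * T.length k) ^ A * N ^ γ) := by
        rw [div_pow, Real.rpow_neg hN.le, ← div_eq_mul_inv, div_div]
    _ ≤ T.length 0 ^ A := div_le_self (pow_pos (T.length_pos 0) A).le hpow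

theorem HasGapBound.exists_isFrostman (hT : T.HasGapBound B) (hdim : dimH T.limitSet = 1)
    (hF : IsBeurlingAhlfors F H) (hB : 1 ≤ B) (hd : d < 1) : ∃ M, T.IsFrostman F M d := by
  obtain ⟨A, γ, hγ, hcons⟩ := hT.exists_mass_cons_div_le hF hB hd
  obtain ⟨R, hR⟩ := T.bddAbove_prod_slack_mul_rpow hdim A hγ
  set W := fun k => ∏ i ∈ Finset.range k, (T.slack i ^ A * (m i : ℝ) ^ (-γ)) with hW
  set Z := T.mass F [] / T.imageLength F [] ^ d
  have hZ : 0 ≤ Z := div_nonneg (T.mass_pos hF.strictMono (L := []) trivial).le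
    (Real.rpow_nonneg (T.imageLength_pos hF.strictMono (L := []) trivial).le d)
  have hiter : ∀ L, IsAddress m L →
      T.mass F L / T.imageLength F L ^ d ≤ Z * W L.length := fun L => by
    induction L with
    | nil => intro _; simp only [hW, List.length_nil, Finset.prod_range_zero, mul_one, le_refl, Z]
    | cons j L ih =>
      intro hL
      have hslack := one_pos.trans_le (T.one_le_slack L.length)
      have hm := T.branching_cast_pos L.length
      calc _ ≤ _ := hcons L j hL
        _ ≤ Z * W L.length * (T.slack L.length ^ A * (m L.length : ℝ) ^ (-γ)) :=
          mul_le_mul_of_nonneg_right (ih hL.1) (by positivity)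
        _ = Z * W (j :: L).length := by
          rw [mul_assoc, List.length_cons]
          simp only [hW, Finset.prod_range_succ]
  refine ⟨Z * R, fun L hL => ?_⟩
  rw [← div_le_iff₀ (Real.rpow_pos_of_pos (T.imageLength_pos hF.strictMono hL) d)]
  exact (hiter L hL).trans (mul_le_mul_of_nonneg_left (hR (mem_range_self _)) hZ)

theorem HasGapBound.dimH_image_limitSet (hT : T.HasGapBound B) (hdim : dimH T.limitSet = 1)
    (hF : IsBeurlingAhlfors F H) (hB : 1 ≤ B) : dimH (F '' T.limitSet) = 1 := by
  refine le_antisymm (Real.dimH_univ ▸ dimH_mono (subset_univ _)) (le_of_forall_lt fun a ha => ?_)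
  obtain ⟨d, had, hd⟩ := ENNReal.lt_iff_exists_nnreal_btwn.1 ha
  have hd1 : d < 1 := by exact_mod_cast hd
  obtain ⟨M, hM⟩ := hT.exists_isFrostman (d := d) hdim hF hB (by exact_mod_cast hd1)
  exact had.trans_le (hM.le_dimH_image hF (by exact_mod_cast zero_le.trans_lt had) hd1.le)

end IntervalTree

/-- The word `(i₁, …, i_k)` of the basic interval at an address. Words list the choices from the
first to the last and count the children from `1`, addresses do the opposite. -/
def toWord : List ℕ → List ℕ
  | [] => []
  | j :: L => toWord L ++ [j + 1]

theorem length_toWord (L : List ℕ) : (toWord L).length = L.length := by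
  induction L with
  | nil => rfl
  | cons j L ih => rw [toWord, List.length_append, List.length_singleton, ih, List.length_cons]

theorem validWord_append_singleton {n : ℕ → ℕ} {σ : List ℕ} {i : ℕ} :
    ValidWord n (σ ++ [i]) ↔ ValidWord n σ ∧ 1 ≤ i ∧ i ≤ n (σ.length + 1) := by
  simp only [ValidWord, List.length_append, List.length_singleton, List.get_eq_getElem]
  constructor
  · refine fun h => ⟨fun j hj => ?_, ?_⟩
    · simpa only [List.getElem_append_left hj] using h j (by omega)
    · simpa only [List.getElem_concat_length] using h σ.length (by omega)
  · rintro ⟨h, hi⟩ j hj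
    rcases Nat.lt_succ_iff_lt_or_eq.1 hj with hlt | rfl
    · simpa only [List.getElem_append_left hlt] using h j hlt
    · simpa only [List.getElem_concat_length] using hi

theorem validWord_toWord {n : ℕ → ℕ} {L : List ℕ} :
    ValidWord n (toWord L) ↔ IsAddress (fun k => n (k + 1)) L := by
  induction L with
  | nil => exact iff_of_true (fun j hj => absurd hj j.not_lt_zero) trivial
  | cons j L ih =>
    rw [toWord, validWord_append_singleton, ih, length_toWord, IsAddress]
    exact and_congr_right fun _ => and_iff_right (Nat.le_add_left 1 j)

theorem exists_toWord_eq {n : ℕ → ℕ} {σ : List ℕ} (hσ : ValidWord n σ) : ∃ L, toWord L = σ := by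
  induction σ using List.reverseRecOn with
  | nil => exact ⟨[], rfl⟩
  | append_singleton σ i ih =>
    obtain ⟨hσ, hi, -⟩ := validWord_append_singleton.1 hσ
    obtain ⟨L, rfl⟩ := ih hσ
    exact ⟨(i - 1) :: L, by rw [toWord, Nat.sub_add_cancel hi]⟩

section GapExtrema

variable {n : ℕ → ℕ} {η : ℕ → ℕ → ℝ} {k l : ℕ}

theorem finite_image_interior_gaps (n : ℕ → ℕ) (η : ℕ → ℕ → ℝ) (k : ℕ) :
    (η k '' {l | 1 ≤ l ∧ l ≤ n k - 1}).Finite :=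
  (finite_Icc 1 (n k - 1)).image _

theorem etaMin_le (hl : 1 ≤ l) (hln : l ≤ n k - 1) : etaMin n η k ≤ η k l :=
  csInf_le (finite_image_interior_gaps n η k).bddBelow ⟨l, ⟨hl, hln⟩, rfl⟩

theorem le_etaMax (hl : 1 ≤ l) (hln : l ≤ n k - 1) : η k l ≤ etaMax n η k :=
  le_csSup (finite_image_interior_gaps n η k).bddAbove ⟨l, ⟨hl, hln⟩, rfl⟩

end GapExtrema

namespace HomogeneousPerfectStructure

variable {n : ℕ → ℕ} {c : ℕ → ℝ} {η : ℕ → ℕ → ℝ} (S : HomogeneousPerfectStructure n c η)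
  {σ L : List ℕ} {i j k : ℕ}

include S in
theorem one_le_branching (k : ℕ) : 1 ≤ n (k + 1) :=
  one_le_two.trans (S.hn _ k.succ_pos)

include S in
theorem etaMin_nonneg (k : ℕ) : 0 ≤ etaMin n η (k + 1) :=
  Real.sInf_nonneg (by
    rintro _ ⟨l, hl, rfl⟩
    exact S.hη _ l k.succ_pos (hl.2.trans (Nat.sub_le _ _)))

theorem b_sub_a (hσ : ValidWord n σ) :
    S.b σ - S.a σ = ∏ i ∈ Finset.range σ.length, c (i + 1) := by
  induction σ using List.reverseRecOn with
  | nil => rw [S.root_a, S.root_b, sub_zero, List.length_nil, Finset.prod_range_zero]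
  | append_singleton σ i ih =>
    obtain ⟨hσ, hi, hin⟩ := validWord_append_singleton.1 hσ
    rw [S.len_eq σ hσ i hi hin, ih hσ, List.length_append, List.length_singleton,
      Finset.prod_range_succ, mul_comm]

theorem a_lt_b (hσ : ValidWord n σ) : S.a σ < S.b σ :=
  sub_pos.1 (S.b_sub_a hσ ▸ Finset.prod_pos fun i _ => (S.hc _ i.succ_pos).1)

theorem a_append_le_a_append (hσ : ValidWord n σ) (hi : 1 ≤ i) (hij : i ≤ j)
    (hj : j ≤ n (σ.length + 1)) : S.a (σ ++ [i]) ≤ S.a (σ ++ [j]) := by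
  induction j, hij using Nat.le_induction with
  | base => rfl
  | succ j hij ih =>
    have hj' : ValidWord n (σ ++ [j]) :=
      validWord_append_singleton.2 ⟨hσ, hi.trans hij, j.le_succ.trans hj⟩
    exact (ih (j.le_succ.trans hj)).trans
      ((S.a_lt_b hj').le.trans (S.ordered σ hσ j (hi.trans hij) hj))

theorem b_append_le_b_append (hσ : ValidWord n σ) (hi : 1 ≤ i) (hij : i ≤ j)
    (hj : j ≤ n (σ.length + 1)) : S.b (σ ++ [i]) ≤ S.b (σ ++ [j]) := by
  linarith [S.a_append_le_a_append hσ hi hij hj, S.len_eq σ hσ i hi (hij.trans hj),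
    S.len_eq σ hσ j (hi.trans hij) hj]

/-- The common length of the hulls of the children of the basic intervals of order `k`, which
arise from these by cutting off the two outer gaps. -/
noncomputable def coreLength (n : ℕ → ℕ) (c : ℕ → ℝ) (η : ℕ → ℕ → ℝ) (k : ℕ) : ℝ :=
  ∏ i ∈ Finset.range k, c (i + 1) - η (k + 1) 0 - η (k + 1) (n (k + 1))

theorem b_append_last_sub_a_append_one (hσ : ValidWord n σ) :
    S.b (σ ++ [n (σ.length + 1)]) - S.a (σ ++ [1]) = coreLength n c η σ.length := by
  rw [coreLength]
  linarith [S.gap_left σ hσ, S.gap_right σ hσ, S.b_sub_a hσ]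

include S in
theorem exists_validWord (k : ℕ) : ∃ σ, ValidWord n σ ∧ σ.length = k :=
  ⟨toWord (List.replicate k 0),
    validWord_toWord.2 (isAddress_replicate_zero (fun k => S.one_le_branching k) k),
    (length_toWord _).trans List.length_replicate⟩

include S in
theorem coreLength_pos (k : ℕ) : 0 < coreLength n c η k := by
  obtain ⟨σ, hσ, rfl⟩ := S.exists_validWord k
  have hn := S.one_le_branching σ.length
  rw [← S.b_append_last_sub_a_append_one hσ, sub_pos]
  exact (S.a_lt_b (validWord_append_singleton.2 ⟨hσ, le_rfl, hn⟩)).trans_le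
    (S.b_append_le_b_append hσ le_rfl hn le_rfl)

/-- The interval tree of the hulls of the children of the basic intervals. Adjacent cells share the
left endpoint of the right one of the two hulls, so that a cell contains the interior gap to the
right of its hull. -/
noncomputable def tree : IntervalTree (fun k => n (k + 1)) where
  left L := S.a (toWord L ++ [1])
  right L := S.b (toWord L ++ [n (L.length + 1)])
  cut L j := if j = 0 then S.a (toWord L ++ [1]) else
    if j < n (L.length + 1) then S.a (toWord (j :: L) ++ [1])
    else S.b (toWord L ++ [n (L.length + 1)])
  length := coreLength n c η
  two_le k := S.hn _ k.succ_pos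
  length_pos := S.coreLength_pos
  right_sub_left L hL := by
    simpa only [length_toWord] using S.b_append_last_sub_a_append_one (validWord_toWord.2 hL)
  cut_zero L := if_pos rfl
  cut_last L := by
    rw [if_neg (Nat.one_le_iff_ne_zero.1 (S.one_le_branching _)), if_neg (lt_irrefl _)]
  cut_le_left L j hL := by
    split_ifs with hj hjn
    · subst hj
      exact S.sub_left _ (validWord_toWord.2 hL) 1 le_rfl (S.one_le_branching _)
    · rfl
    · exact absurd hL.2 hjn
  right_le_cut L j hL := by
    have hσ := validWord_toWord.2 hL
    have hsub : S.b (toWord (j :: L) ++ [n ((j :: L).length + 1)]) ≤ S.b (toWord (j :: L)) :=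
      S.sub_right _ hσ _ (S.one_le_branching _) (by rw [length_toWord])
    rw [if_neg j.succ_ne_zero]
    split_ifs with hj
    · have hnext : ValidWord n (toWord ((j + 1) :: L)) := validWord_toWord.2 ⟨hL.1, hj⟩
      exact hsub.trans ((S.ordered _ (validWord_toWord.2 hL.1) (j + 1) (Nat.le_add_left 1 j)
        (by rwa [length_toWord])).trans (S.sub_left _ hnext 1 le_rfl (S.one_le_branching _)))
    · have hj : j + 1 = n (L.length + 1) := le_antisymm hL.2 (not_lt.1 hj)
      exact hj ▸ hsub

theorem interval_tree_subset (hL : IsAddress (fun k => n (k + 1)) L) :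
    S.tree.interval L ⊆ Icc (S.a (toWord L)) (S.b (toWord L)) :=
  Icc_subset_Icc
    (S.sub_left _ (validWord_toWord.2 hL) 1 le_rfl (S.one_le_branching _))
    (S.sub_right _ (validWord_toWord.2 hL) _ (S.one_le_branching _) (by rw [length_toWord]))

theorem Icc_toWord_cons_subset (hL : IsAddress (fun k => n (k + 1)) (j :: L)) :
    Icc (S.a (toWord (j :: L))) (S.b (toWord (j :: L))) ⊆ S.tree.interval L := by
  have hσ := validWord_toWord.2 hL.1
  have hj : j + 1 ≤ n ((toWord L).length + 1) := by rw [length_toWord]; exact hL.2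
  exact Icc_subset_Icc (S.a_append_le_a_append hσ le_rfl (Nat.le_add_left 1 j) hj)
    (S.b_append_le_b_append hσ (Nat.le_add_left 1 j) hL.2 (by rw [length_toWord]))

theorem limitSet_tree : S.tree.limitSet = S.E := by
  refine Subset.antisymm (iInter_mono fun k => iUnion₂_subset fun L hL => ?_)
    (subset_iInter fun k => (iInter_subset _ (k + 1)).trans (iUnion₂_subset ?_))
  · obtain ⟨haddr, hlen⟩ := mem_addresses.1 hL
    exact (S.interval_tree_subset haddr).trans (subset_biUnion_of_mem
      (u := fun σ => Icc (S.a σ) (S.b σ)) ⟨validWord_toWord.2 haddr, (length_toWord L).trans hlen⟩)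
  · rintro σ ⟨hσ, hlen⟩
    obtain ⟨L', rfl⟩ := exists_toWord_eq hσ
    rw [length_toWord] at hlen
    obtain ⟨j, L, rfl⟩ := List.exists_cons_of_length_eq_add_one hlen
    have haddr := validWord_toWord.1 hσ
    exact (S.Icc_toWord_cons_subset haddr).trans (subset_biUnion_of_mem
      (u := S.tree.interval) (mem_addresses.2 ⟨haddr.1, Nat.succ_injective hlen⟩))

theorem mul_prod_add_mul_etaMin_le (hσ : ValidWord n σ) (hi : i + 1 ≤ n (σ.length + 1)) :
    (i + 1) * ∏ i ∈ Finset.range (σ.length + 1), c (i + 1) + i * etaMin n η (σ.length + 1) ≤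
      S.b (σ ++ [i + 1]) - S.a (σ ++ [1]) := by
  have hchild : ∀ i, i + 1 ≤ n (σ.length + 1) → S.b (σ ++ [i + 1]) - S.a (σ ++ [i + 1]) =
      ∏ i ∈ Finset.range (σ.length + 1), c (i + 1) := fun i hi => by
    simpa only [List.length_append, List.length_singleton] using
      S.b_sub_a (validWord_append_singleton.2 ⟨hσ, Nat.le_add_left 1 i, hi⟩)
  induction i with
  | zero =>
    rw [Nat.cast_zero, zero_add, one_mul, zero_mul, add_zero]
    exact (hchild 0 hi).ge
  | succ i ih =>
    have hgap := S.gap_mid σ hσ (i + 1) (Nat.le_add_left 1 i) (Nat.le_sub_one_of_lt hi)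
    have hmin : etaMin n η (σ.length + 1) ≤ η (σ.length + 1) (i + 1) :=
      etaMin_le (Nat.le_add_left 1 i) (Nat.le_sub_one_of_lt hi)
    push_cast
    linarith [ih ((i + 1).le_succ.trans hi), hchild (i + 1) hi]

/-- A lower bound for the distance between adjacent hulls of depth `k + 1`: between them lie an
interior gap of order `k + 1` and two outer gaps of order `k + 2`. -/
noncomputable def minCoreGap (n : ℕ → ℕ) (η : ℕ → ℕ → ℝ) (k : ℕ) : ℝ :=
  η (k + 2) 0 + etaMin n η (k + 1) + η (k + 2) (n (k + 2))

include S in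
theorem minCoreGap_le_two_mul (k : ℕ) : minCoreGap n η k ≤
    2 * (coreLength n c η k / n (k + 1) - coreLength n c η (k + 1)) := by
  obtain ⟨σ, hσ, rfl⟩ := S.exists_validWord k
  obtain ⟨i, hi⟩ := Nat.exists_eq_add_of_le' (S.one_le_branching σ.length)
  have hi1 : (1 : ℝ) ≤ i := by
    have := S.hn (σ.length + 1) (Nat.succ_pos _)
    exact_mod_cast (by omega : 1 ≤ i)
  have hsum := S.mul_prod_add_mul_etaMin_le hσ hi.ge
  rw [← hi, S.b_append_last_sub_a_append_one hσ] at hsum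
  have hmin := S.etaMin_nonneg σ.length
  have hleft := S.hη (σ.length + 2) 0 (Nat.succ_pos _) (Nat.zero_le _)
  have hright := S.hη (σ.length + 2) (n (σ.length + 2)) (Nat.succ_pos _) le_rfl
  have hnext : coreLength n c η (σ.length + 1) = ∏ i ∈ Finset.range (σ.length + 1), c (i + 1) -
      η (σ.length + 2) 0 - η (σ.length + 2) (n (σ.length + 2)) := rfl
  have hmean : ∏ i ∈ Finset.range (σ.length + 1), c (i + 1) + etaMin n η (σ.length + 1) / 2 ≤
      coreLength n c η σ.length / n (σ.length + 1) := by
    rw [le_div_iff₀' (by rw [hi]; positivity), hi, Nat.cast_add, Nat.cast_one]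
    nlinarith
  rw [minCoreGap]
  linarith

theorem left_tree_sub_cut_le (hL : IsAddress (fun k => n (k + 1)) (j :: L)) :
    S.tree.left (j :: L) - S.tree.cut L j ≤ η (L.length + 2) 0 := by
  have houter := S.gap_left _ (validWord_toWord.2 hL)
  rw [length_toWord] at houter
  have hη := S.hη (L.length + 2) 0 (Nat.succ_pos _) (Nat.zero_le _)
  simp only [tree]
  split_ifs with hj hjn
  · subst hj
    exact houter.le
  · rwa [sub_self]
  · exact absurd hL.2 hjn

theorem cut_tree_sub_right_of_lt (hL : IsAddress (fun k => n (k + 1)) (j :: L))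
    (hj : j + 1 < n (L.length + 1)) :
    S.tree.cut L (j + 1) - S.tree.right (j :: L) = η (L.length + 2) (n (L.length + 2)) +
      η (L.length + 1) (j + 1) + η (L.length + 2) 0 := by
  have hleft := S.gap_right _ (validWord_toWord.2 hL)
  have hnext : ValidWord n (toWord ((j + 1) :: L)) := validWord_toWord.2 ⟨hL.1, hj⟩
  have hright := S.gap_left _ hnext
  have hmid := S.gap_mid _ (validWord_toWord.2 hL.1) (j + 1) (Nat.le_add_left 1 j)
    (by rw [length_toWord]; exact Nat.le_sub_one_of_lt hj)
  rw [length_toWord] at hleft hright hmid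
  simp only [tree, if_neg j.succ_ne_zero, if_pos hj]
  simp only [toWord, List.length_cons] at hleft hright ⊢
  linarith

theorem cut_tree_sub_right_of_eq (hL : IsAddress (fun k => n (k + 1)) (j :: L))
    (hj : j + 1 = n (L.length + 1)) :
    S.tree.cut L (j + 1) - S.tree.right (j :: L) = η (L.length + 2) (n (L.length + 2)) := by
  have hleft := S.gap_right _ (validWord_toWord.2 hL)
  rw [length_toWord] at hleft
  simp only [tree, if_neg j.succ_ne_zero, ← hj, lt_self_iff_false, if_false]
  exact hleft

theorem hasGapBound_tree {C : ℝ} (hC : 1 ≤ C)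
    (hgap : ∀ k, 1 ≤ k → etaMax n η k ≤ C * etaMin n η k) :
    S.tree.HasGapBound (2 * C) := by
  intro L j hL
  have hleft := S.hη (L.length + 2) 0 (Nat.succ_pos _) (Nat.zero_le _)
  have hright := S.hη (L.length + 2) (n (L.length + 2)) (Nat.succ_pos _) le_rfl
  have hmin := S.etaMin_nonneg L.length
  have hbound : C * minCoreGap n η L.length ≤
      2 * C * (coreLength n c η L.length / n (L.length + 1) - coreLength n c η (L.length + 1)) := by
    rw [mul_comm 2 C, mul_assoc]
    exact mul_le_mul_of_nonneg_left (S.minCoreGap_le_two_mul _) (zero_le_one.trans hC)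
  refine ⟨le_trans ?_ hbound, le_trans ?_ hbound⟩ <;> rw [minCoreGap]
  · nlinarith [S.left_tree_sub_cut_le hL]
  · rcases (Nat.succ_le_of_lt hL.2).lt_or_eq with hj | hj
    · have hmax : η (L.length + 1) (j + 1) ≤ C * etaMin n η (L.length + 1) :=
        (le_etaMax (Nat.le_add_left 1 j) (Nat.le_sub_one_of_lt hj)).trans
          (hgap _ (Nat.succ_pos _))
      nlinarith [S.cut_tree_sub_right_of_lt hL hj]
    · nlinarith [S.cut_tree_sub_right_of_eq hL hj]

theorem dimH_image_of_isBeurlingAhlfors {F : ℝ → ℝ} {H C : ℝ} (hdim : dimH S.E = 1) (hC : 1 ≤ C)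
    (hgap : ∀ k, 1 ≤ k → etaMax n η k ≤ C * etaMin n η k) (hF : IsBeurlingAhlfors F H) :
    dimH (F '' S.E) = 1 := by
  rw [← S.limitSet_tree] at hdim ⊢
  exact (S.hasGapBound_tree hC hgap).dimH_image_limitSet hdim hF (by linarith)

theorem dimH_image_of_isQuasisymmetric {f : ℝ ≃ₜ ℝ} {C : ℝ} (hdim : dimH S.E = 1) (hC : 1 ≤ C)
    (hgap : ∀ k, 1 ≤ k → etaMax n η k ≤ C * etaMin n η k) (hf : IsQuasisymmetric f) :
    dimH (f '' S.E) = 1 := by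
  rcases f.continuous.strictMono_of_inj f.injective with hmono | hanti
  · obtain ⟨H, hH⟩ := hf.exists_isBeurlingAhlfors hmono
    exact S.dimH_image_of_isBeurlingAhlfors hdim hC hgap hH
  · obtain ⟨H, hH⟩ := hf.trans_neg.exists_isBeurlingAhlfors fun x y hxy => neg_lt_neg (hanti hxy)
    have hneg := S.dimH_image_of_isBeurlingAhlfors hdim hC hgap hH
    rw [← hneg, ← (IsometryEquiv.neg ℝ).isometry.dimH_image, ← image_comp]
    rfl

end HomogeneousPerfectStructure

/-- Let `E = E(J_∅,{n_k},{c_k},{η_{k,j}})` be a homogeneous perfect set with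
`dim_H E = 1`. If there is a constant `C ≥ 1` with
`max_{1≤l≤n_k−1} η_{k,l} ≤ C · min_{1≤l≤n_k−1} η_{k,l}` for all `k ≥ 1`, then
`dim_H f(E) = 1` for every 1-dimensional quasisymmetric mapping `f`; in particular `E` is
1-dimensional quasisymmetrically minimal. -/
theorem homogeneous_perfect_minimal_of_gap_ratio_bounded
    (n : ℕ → ℕ) (c : ℕ → ℝ) (η : ℕ → ℕ → ℝ)
    (S : HomogeneousPerfectStructure n c η)
    (hdim : dimH S.E = 1)
    (C : ℝ) (hC : 1 ≤ C)
    (hgap : ∀ k, 1 ≤ k → etaMax n η k ≤ C * etaMin n η k) :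
    (∀ f : ℝ ≃ₜ ℝ, IsQuasisymmetric f → dimH (f '' S.E) = 1) ∧
      (∀ f : ℝ ≃ₜ ℝ, IsQuasisymmetric f → dimH S.E ≤ dimH (f '' S.E)) := by
  have h := fun f hf => S.dimH_image_of_isQuasisymmetric (f := f) hdim hC hgap hf
  exact ⟨h, fun f hf => by rw [hdim, h f hf]⟩
end

section
/- Let f be a 1-dimensional quasisymmetric mapping. Then there exist constants λ > 0 and p, q with 0 < p ≤ 1 ≤ q, depending only on f, such that λ·(|J|/|I|)^q ≤ |f(J)|/|f(I)| ≤ 4·(|J|/|I|)^p for all nondegenerate compact intervals I, J ⊆ ℝ with J ⊆ I, where |f(I)| denotes the length of the interval f(I). -/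
open Set MeasureTheory

/-!
For an increasing `f`, quasisymmetry tested on symmetric triples says that `f` maps adjacent
intervals of equal length to intervals of comparable length. Hence doubling `J` to one side
multiplies `|f(J)|` by a factor between `(M + 1) / M` and `M + 1`. A short `J ⊆ I` can be doubled
inside `I` roughly `log₂ (|I| / |J|)` times: the first factor then gives the upper bound, the second
one the lower bound. Decreasing maps are handled by passing to `-f`.
-/

/-- The Beurling–Ahlfors `M`-condition: quasisymmetry restricted to the triples
`x - t, x, x + t`. Since `t` may be negative, it bounds each of the two increments by the other. -/
def BeurlingAhlforsCondition (M : ℝ) (f : ℝ → ℝ) : Prop :=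
  ∀ x t : ℝ, |f (x + t) - f x| ≤ M * |f x - f (x - t)|

theorem IsQuasisymmetric.exists_beurlingAhlforsCondition {f : ℝ ≃ₜ ℝ} (hf : IsQuasisymmetric f) :
    ∃ M, BeurlingAhlforsCondition M f := by
  obtain ⟨η, hη⟩ := hf
  refine ⟨η ⟨1, mem_Ici.2 zero_le_one⟩, fun x t => ?_⟩
  rcases eq_or_ne t 0 with rfl | ht
  · simp
  have hratio : |x - (x + t)| / |x - (x - t)| = 1 := by simp [ht]
  have hne : x ≠ x - t := fun h => ht (by linarith)
  have hpos : 0 < |f x - f (x - t)| := abs_pos.2 (sub_ne_zero.2 (f.injective.ne hne))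
  have hquot := hη (x + t) (x - t) x (by simpa using ht) hne (fun h => ht (by linarith))
  simp only [hratio] at hquot
  rwa [div_le_iff₀ hpos, abs_sub_comm] at hquot

theorem pow_rpow_logb {b s : ℝ} (hb : 0 < b) (hb1 : b ≠ 1) (hs : 0 < s) (n : ℕ) :
    (b ^ n) ^ Real.logb b s = s ^ n := by
  rw [← Real.rpow_pow_comm hb.le, Real.rpow_logb hb hb1 hs]

theorem one_le_logb_of_base_lt_one {b s : ℝ} (hb : 0 < b) (hb1 : b < 1) (hs : 0 < s)
    (hsb : s ≤ b) : 1 ≤ Real.logb b s := by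
  rwa [Real.le_logb_iff_rpow_le_of_base_lt_one hb hb1 hs, Real.rpow_one]

theorem logb_le_one_of_base_lt_one {b s : ℝ} (hb : 0 < b) (hb1 : b < 1) (hbs : b ≤ s) :
    Real.logb b s ≤ 1 := by
  rwa [Real.logb_le_iff_le_rpow_of_base_lt_one hb hb1 (hb.trans_le hbs), Real.rpow_one]

theorem toReal_volume_image_Icc_of_monotoneOn {f : ℝ → ℝ} {a b : ℝ} (hab : a ≤ b)
    (hcont : ContinuousOn f (Icc a b)) (hmono : MonotoneOn f (Icc a b)) :
    (volume (f '' Icc a b)).toReal = f b - f a := by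
  rw [hcont.image_Icc_of_monotoneOn hab hmono, Real.volume_Icc, ENNReal.toReal_ofReal
    (sub_nonneg.2 (hmono (left_mem_Icc.2 hab) (right_mem_Icc.2 hab) hab))]

theorem volume_image_neg {α : Type*} (f : α → ℝ) (s : Set α) :
    volume ((-f) '' s) = volume (f '' s) := by
  rw [← Measure.measure_neg volume (f '' s), ← image_neg_eq_neg, image_image]
  rfl

namespace BeurlingAhlforsCondition

variable {f : ℝ → ℝ} {M a b x y : ℝ}

theorem neg (hf : BeurlingAhlforsCondition M f) : BeurlingAhlforsCondition M (-f) := by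
  intro x t
  simpa only [Pi.neg_apply, neg_sub_neg, abs_sub_comm] using hf x t

theorem right_le_mul_left (hf : BeurlingAhlforsCondition M f) (hmono : StrictMono f) {m : ℝ}
    (ham : a < m) (hmid : b - m = m - a) : f b - f m ≤ M * (f m - f a) := by
  have h := hf m (m - a)
  rwa [← hmid, add_sub_cancel, hmid, sub_sub_cancel, abs_of_pos (sub_pos.2 (hmono (by linarith))),
    abs_of_pos (sub_pos.2 (hmono ham))] at h

theorem left_le_mul_right (hf : BeurlingAhlforsCondition M f) (hmono : StrictMono f) {m : ℝ}
    (ham : a < m) (hmid : b - m = m - a) : f m - f a ≤ M * (f b - f m) := by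
  have h := hf m (a - m)
  rwa [add_sub_cancel, show m - (a - m) = b by linarith, abs_sub_comm, abs_sub_comm (f m) (f b),
    abs_of_pos (sub_pos.2 (hmono ham)), abs_of_pos (sub_pos.2 (hmono (by linarith)))] at h

theorem one_le (hf : BeurlingAhlforsCondition M f) (hmono : StrictMono f) : 1 ≤ M := by
  have hleft := hf.left_le_mul_right hmono (a := 0) (m := 1) (b := 2) one_pos (by norm_num)
  have hright := hf.right_le_mul_left hmono (a := 0) (m := 1) (b := 2) one_pos (by norm_num)
  have h01 := hmono (show (0 : ℝ) < 1 by norm_num)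
  have h12 := hmono (show (1 : ℝ) < 2 by norm_num)
  by_contra! hM
  nlinarith

theorem sub_le_pow_mul_sub (hf : BeurlingAhlforsCondition M f) (hmono : StrictMono f) (n : ℕ)
    (hax : a ≤ x) (hxy : x < y) (hyb : y ≤ b) (hlen : (2 ^ (n + 1) - 1) * (y - x) ≤ b - a) :
    f y - f x ≤ (M / (M + 1)) ^ n * (f b - f a) := by
  induction n generalizing x y with
  | zero => linarith [hmono.monotone hax, hmono.monotone hyb]
  | succ n ih =>
    have hM := hf.one_le hmono
    have hdouble : ∀ u v, f y - f x ≤ M * (f v - f u - (f y - f x)) → a ≤ u → v ≤ b →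
        v - u = 2 * (y - x) → f y - f x ≤ (M / (M + 1)) ^ (n + 1) * (f b - f a) := by
      intro u v hgrowth hau hvb huv
      have hih := ih hau (by linarith) hvb (by rw [huv]; rw [pow_succ] at hlen; linarith)
      calc f y - f x ≤ M / (M + 1) * (f v - f u) := by
            rw [div_mul_eq_mul_div, le_div_iff₀ (by linarith)]; linarith
        _ ≤ M / (M + 1) * ((M / (M + 1)) ^ n * (f b - f a)) := by gcongr
        _ = (M / (M + 1)) ^ (n + 1) * (f b - f a) := by ring
    have hthree : 3 * (y - x) ≤ b - a := by
      have : (1 : ℝ) ≤ 2 ^ n := one_le_pow₀ one_le_two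
      rw [pow_succ, pow_succ] at hlen
      nlinarith
    -- The gaps `x - a` and `b - y` add up to at least `2 * (y - x)`, so one of them has room.
    rcases le_total (y - x) (b - y) with hroom | hroom
    · have h := hf.left_le_mul_right hmono hxy (b := 2 * y - x) (by ring)
      exact hdouble x (2 * y - x) (by linarith) hax (by linarith) (by ring)
    · have h := hf.right_le_mul_left hmono (a := 2 * x - y) (b := y) (m := x) (by linarith)
        (by ring)
      exact hdouble (2 * x - y) y (by linarith) (by linarith) hyb (by ring)

theorem inv_two_le_div_add_one (hf : BeurlingAhlforsCondition M f) (hmono : StrictMono f) :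
    2⁻¹ ≤ M / (M + 1) := by
  have hM := hf.one_le hmono
  rw [le_div_iff₀ (by linarith)]
  linarith

theorem sub_le_four_mul_pow_mul_sub (hf : BeurlingAhlforsCondition M f) (hmono : StrictMono f)
    (n : ℕ) (hax : a ≤ x) (hxy : x < y) (hyb : y ≤ b) (hlen : 2 ^ n * (y - x) ≤ b - a) :
    f y - f x ≤ 4 * (M / (M + 1)) ^ (n + 1) * (f b - f a) := by
  have hhalf := hf.inv_two_le_div_add_one hmono
  set c := M / (M + 1)
  have hI : 0 < f b - f a := sub_pos.2 (hmono (by linarith))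
  cases n with
  | zero =>
    calc f y - f x ≤ 1 * (f b - f a) := by linarith [hmono.monotone hax, hmono.monotone hyb]
      _ ≤ 4 * c ^ (0 + 1) * (f b - f a) := by
          gcongr
          rw [zero_add, pow_one]
          linarith
  | succ n =>
    calc f y - f x ≤ c ^ n * (f b - f a) :=
          hf.sub_le_pow_mul_sub hmono n hax hxy hyb (by linarith)
      -- The two doublings that need not fit into `[a, b]` cost a factor `c⁻² ≤ 4`.
      _ ≤ (4 * c ^ 2) * c ^ n * (f b - f a) := by
          gcongr
          exact le_mul_of_one_le_left (by positivity) (by nlinarith)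
      _ = 4 * c ^ (n + 1 + 1) * (f b - f a) := by ring

theorem sub_le_add_one_pow_mul_sub (hf : BeurlingAhlforsCondition M f) (hmono : StrictMono f)
    (n : ℕ) (hax : a ≤ x) (hxy : x < y) (hyb : y ≤ b) (hlen : b - a ≤ 2 ^ n * (y - x)) :
    f b - f a ≤ (M + 1) ^ (n + 1) * (f y - f x) := by
  have hM := hf.one_le hmono
  induction n generalizing x y with
  | zero =>
    obtain rfl : x = a := by linarith
    obtain rfl : y = b := by linarith
    rw [zero_add, pow_one]
    exact le_mul_of_one_le_left (sub_nonneg.2 (hmono.monotone hxy.le)) (by linarith)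
  | succ n ih =>
    have hright := hf.right_le_mul_left hmono hxy (b := 2 * y - x) (by ring)
    have hleft := hf.left_le_mul_right hmono (a := 2 * x - y) (b := y) (m := x) (by linarith)
      (by ring)
    have hdouble : ∀ u v, f v - f u ≤ (M + 1) * (f y - f x) → a ≤ u → v ≤ b →
        v - u = 2 * (y - x) → f b - f a ≤ (M + 1) ^ (n + 1 + 1) * (f y - f x) := by
      intro u v hgrowth hau hvb huv
      have hih := ih hau (by linarith) hvb (by rw [huv]; rw [pow_succ] at hlen; linarith)
      calc f b - f a ≤ (M + 1) ^ (n + 1) * (f v - f u) := hih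
        _ ≤ (M + 1) ^ (n + 1) * ((M + 1) * (f y - f x)) := by gcongr
        _ = (M + 1) ^ (n + 1 + 1) * (f y - f x) := by ring
    rcases le_or_gt (2 * y - x) b with hb | hb
    · exact hdouble x (2 * y - x) (by linarith) hax hb (by ring)
    rcases le_or_gt a (2 * x - y) with ha | ha
    · exact hdouble (2 * x - y) y (by linarith) ha hyb (by ring)
    -- Doubling to either side leaves `[a, b]`, so the two doubled intervals cover it.
    have hJ : 0 < f y - f x := sub_pos.2 (hmono hxy)
    calc f b - f a ≤ f (2 * y - x) - f (2 * x - y) := by linarith [hmono hb, hmono ha]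
      _ ≤ (2 * M + 1) * (f y - f x) := by linarith
      _ ≤ (M + 1) ^ 2 * (f y - f x) := by gcongr; nlinarith
      _ ≤ (M + 1) ^ (n + 1 + 1) * (f y - f x) := by gcongr <;> linarith

theorem sub_le_four_mul_rpow_mul_sub (hf : BeurlingAhlforsCondition M f) (hmono : StrictMono f)
    (hax : a ≤ x) (hxy : x < y) (hyb : y ≤ b) :
    f y - f x ≤ 4 * ((y - x) / (b - a)) ^ Real.logb 2⁻¹ (M / (M + 1)) * (f b - f a) := by
  have hM := hf.one_le hmono
  have hab : a < b := by linarith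
  have hratio : 0 < (y - x) / (b - a) := div_pos (sub_pos.2 hxy) (sub_pos.2 hab)
  obtain ⟨n, hlow, hupp⟩ := exists_nat_pow_near_of_lt_one (y := (2 : ℝ)⁻¹) hratio
    (div_le_one_of_le₀ (by linarith) (by linarith)) (by norm_num) (by norm_num)
  have hpow : (M / (M + 1)) ^ (n + 1) ≤ ((y - x) / (b - a)) ^ Real.logb 2⁻¹ (M / (M + 1)) := by
    rw [← pow_rpow_logb (b := 2⁻¹) (by norm_num) (by norm_num) (by positivity)]
    have := Real.logb_pos_of_base_lt_one (b := 2⁻¹) (by norm_num) (by norm_num)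
      (by positivity : 0 < M / (M + 1)) ((div_lt_one (by linarith)).2 (by linarith))
    gcongr
  have hlen : 2 ^ n * (y - x) ≤ b - a := by
    rwa [div_le_iff₀ (sub_pos.2 hab), inv_pow, le_inv_mul_iff₀ (by positivity)] at hupp
  have hI : 0 < f b - f a := sub_pos.2 (hmono hab)
  calc f y - f x ≤ 4 * (M / (M + 1)) ^ (n + 1) * (f b - f a) :=
        hf.sub_le_four_mul_pow_mul_sub hmono n hax hxy hyb hlen
    _ ≤ 4 * ((y - x) / (b - a)) ^ Real.logb 2⁻¹ (M / (M + 1)) * (f b - f a) := by gcongr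

theorem rpow_mul_sub_le_sub (hf : BeurlingAhlforsCondition M f) (hmono : StrictMono f)
    (hax : a ≤ x) (hxy : x < y) (hyb : y ≤ b) :
    (M + 1)⁻¹ ^ 2 * ((y - x) / (b - a)) ^ Real.logb 2⁻¹ (M + 1)⁻¹ * (f b - f a) ≤ f y - f x := by
  have hM := hf.one_le hmono
  have hab : a < b := by linarith
  have hratio : 0 < (y - x) / (b - a) := div_pos (sub_pos.2 hxy) (sub_pos.2 hab)
  obtain ⟨n, hlow, hupp⟩ := exists_nat_pow_near_of_lt_one (y := (2 : ℝ)⁻¹) hratio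
    (div_le_one_of_le₀ (by linarith) (by linarith)) (by norm_num) (by norm_num)
  have hpow : ((y - x) / (b - a)) ^ Real.logb 2⁻¹ (M + 1)⁻¹ ≤ (M + 1)⁻¹ ^ n := by
    rw [← pow_rpow_logb (b := 2⁻¹) (by norm_num) (by norm_num) (by positivity)]
    have := Real.logb_pos_of_base_lt_one (b := 2⁻¹) (by norm_num) (by norm_num)
      (by positivity : 0 < (M + 1)⁻¹) (inv_lt_one_of_one_lt₀ (by linarith))
    gcongr
  have hlen : b - a ≤ 2 ^ (n + 1) * (y - x) := by
    rw [lt_div_iff₀ (sub_pos.2 hab), inv_pow, inv_mul_lt_iff₀ (by positivity)] at hlow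
    exact hlow.le
  have hI : 0 < f b - f a := sub_pos.2 (hmono hab)
  calc (M + 1)⁻¹ ^ 2 * ((y - x) / (b - a)) ^ Real.logb 2⁻¹ (M + 1)⁻¹ * (f b - f a)
      ≤ (M + 1)⁻¹ ^ 2 * (M + 1)⁻¹ ^ n * (f b - f a) := by gcongr
    _ = ((M + 1) ^ (n + 1 + 1))⁻¹ * (f b - f a) := by rw [← inv_pow]; ring
    _ ≤ f y - f x := by
      rw [inv_mul_le_iff₀ (by positivity)]
      exact hf.sub_le_add_one_pow_mul_sub hmono (n + 1) hax hxy hyb hlen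

end BeurlingAhlforsCondition

theorem quasisymmetric_distortion_general {f : ℝ → ℝ} {M : ℝ} (hcont : Continuous f)
    (hinj : Function.Injective f) (hf : BeurlingAhlforsCondition M f) :
    ∃ lam p q : ℝ, 0 < lam ∧ 0 < p ∧ p ≤ 1 ∧ 1 ≤ q ∧
      ∀ x₁ x₂ y₁ y₂ : ℝ, x₁ < x₂ → y₁ < y₂ → Icc y₁ y₂ ⊆ Icc x₁ x₂ →
        lam * ((y₂ - y₁) / (x₂ - x₁)) ^ q ≤
            (volume (f '' Icc y₁ y₂)).toReal / (volume (f '' Icc x₁ x₂)).toReal ∧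
          (volume (f '' Icc y₁ y₂)).toReal / (volume (f '' Icc x₁ x₂)).toReal ≤
            4 * ((y₂ - y₁) / (x₂ - x₁)) ^ p := by
  wlog hmono : StrictMono f generalizing f
  · have hanti : StrictAnti f := (hcont.strictMono_of_inj hinj).resolve_left hmono
    simpa only [volume_image_neg] using this hcont.neg (neg_injective.comp hinj) hf.neg hanti.neg
  have hM := hf.one_le hmono
  refine ⟨(M + 1)⁻¹ ^ 2, Real.logb 2⁻¹ (M / (M + 1)), Real.logb 2⁻¹ (M + 1)⁻¹, by positivity,
    Real.logb_pos_of_base_lt_one (by norm_num) (by norm_num) (by positivity)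
      ((div_lt_one (by linarith)).2 (by linarith)),
    logb_le_one_of_base_lt_one (by norm_num) (by norm_num) (hf.inv_two_le_div_add_one hmono),
    one_le_logb_of_base_lt_one (by norm_num) (by norm_num) (by positivity)
      (inv_anti₀ two_pos (by linarith)),
    fun x₁ x₂ y₁ y₂ hx hy hsub => ?_⟩
  obtain ⟨hleft, hright⟩ := (Icc_subset_Icc_iff hy.le).1 hsub
  rw [toReal_volume_image_Icc_of_monotoneOn hx.le hcont.continuousOn (hmono.monotone.monotoneOn _),
    toReal_volume_image_Icc_of_monotoneOn hy.le hcont.continuousOn (hmono.monotone.monotoneOn _),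
    le_div_iff₀ (sub_pos.2 (hmono hx)), div_le_iff₀ (sub_pos.2 (hmono hx))]
  exact ⟨hf.rpow_mul_sub_le_sub hmono hleft hy hright,
    hf.sub_le_four_mul_rpow_mul_sub hmono hleft hy hright⟩

/-- If `f` is a 1-dimensional quasisymmetric mapping, then there are
constants `λ > 0` and `0 < p ≤ 1 ≤ q`, depending only on `f`, such that
`λ (|J|/|I|)^q ≤ |f(J)|/|f(I)| ≤ 4 (|J|/|I|)^p` for all nondegenerate compact intervals
`J ⊆ I ⊆ ℝ`, where `|f(I)|` denotes the length of the interval `f(I)`. -/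
theorem quasisymmetric_distortion (f : ℝ ≃ₜ ℝ) (hf : IsQuasisymmetric f) :
    ∃ lam p q : ℝ, 0 < lam ∧ 0 < p ∧ p ≤ 1 ∧ 1 ≤ q ∧
      ∀ x₁ x₂ y₁ y₂ : ℝ, x₁ < x₂ → y₁ < y₂ → Icc y₁ y₂ ⊆ Icc x₁ x₂ →
        lam * ((y₂ - y₁) / (x₂ - x₁)) ^ q ≤
            (volume (f '' Icc y₁ y₂)).toReal / (volume (f '' Icc x₁ x₂)).toReal ∧
          (volume (f '' Icc y₁ y₂)).toReal / (volume (f '' Icc x₁ x₂)).toReal ≤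
            4 * ((y₂ - y₁) / (x₂ - x₁)) ^ p := by
  obtain ⟨M, hM⟩ := hf.exists_beurlingAhlforsCondition
  exact quasisymmetric_distortion_general f.continuous f.injective hM
end
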